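/- arXiv:1910.00485 — 8 statements merged into one kernel-verified Lean document; each statement's English description precedes it below -/
import Mathlib

section
/- Let P be a finite nonempty poset and let m := a(P) be the number of antichains of P (including the empty antichain). Then there is a constant C = C(P) > 0 such that for every n ≥ 1, the number of injective poset homomorphisms from P into 𝒫(n) satisfies | |inj-hom_P(𝒫(n))| − m^n | ≤ C·(m−1)^n; in particular |inj-hom_P(𝒫(n))| = (1+o(1))·m^n as n → ∞. -/
open Classical in
/-- The finset of all antichains (including the empty antichain) of a finite poset `P`. -/
noncomputable def antichains (P : Type*) [Fintype P] [PartialOrder P] : Finset (Finset P) :=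
  Finset.univ.filter (fun A => IsAntichain (· ≤ ·) (A : Set P))

open Classical in
/-- Antichains of a finite poset are equinumerous with its upper sets. -/
theorem antichains_card_eq (P : Type) [Fintype P] [PartialOrder P] :
    (antichains P).card = Nat.card (UpperSet P) := by
  have : Fintype (UpperSet P) := Fintype.ofFinite _
  rw [Nat.card_eq_fintype_card, ← Finset.card_univ]
  refine Finset.card_bij' (fun A _ => upperClosure (A : Set P))
    (fun U _ => Finset.univ.filter (fun x => Minimal (fun y => y ∈ U) x)) ?_ ?_ ?_ ?_
  · intro A _
    exact Finset.mem_univ _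
  · intro U _
    simp only [antichains, Finset.mem_filter, Finset.mem_univ, true_and]
    intro x hx y hy hne hle
    simp only [Finset.coe_filter, Finset.mem_univ, true_and, Set.mem_ofPred_eq] at hx hy
    exact hne (le_antisymm hle (hy.2 hx.1 hle))
  · intro A hA
    simp only [antichains, Finset.mem_filter, Finset.mem_univ, true_and] at hA
    ext x
    simp only [Finset.mem_filter, Finset.mem_univ, true_and]
    constructor
    · intro hx
      obtain ⟨a, ha, hax⟩ := mem_upperClosure.1 hx.1
      have h2 := hx.2 (mem_upperClosure.2 ⟨a, ha, le_rfl⟩) hax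
      have : a = x := le_antisymm hax h2
      exact this ▸ (by simpa using ha)
    · intro hx
      refine ⟨mem_upperClosure.2 ⟨x, by simpa using hx, le_rfl⟩, ?_⟩
      intro y hy hyx
      obtain ⟨a, ha, hay⟩ := mem_upperClosure.1 hy
      have : a = x := hA.eq ha (by simpa using hx) (hay.trans hyx)
      exact this ▸ hay
  · intro U _
    ext x
    simp only [SetLike.mem_coe, mem_upperClosure]
    constructor
    · rintro ⟨a, ha, hax⟩
      have ha : Minimal (fun y => y ∈ U) a := by simpa using ha
      exact U.upper hax ha.1
    · intro hx
      obtain ⟨a, hax, ha⟩ := exists_minimal_le_of_wellFoundedLT (fun y => y ∈ U) x hx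
      exact ⟨a, by simpa using ha, hax⟩

open Classical in
/-- Injective homomorphisms correspond to separating tuples of upper sets. -/
noncomputable def injHomEquiv (P : Type) [PartialOrder P] (n : ℕ) :
    {φ : P → Finset (Fin n) // Monotone φ ∧ Function.Injective φ} ≃
    {f : Fin n → UpperSet P // ∀ p q, (∀ i, p ∈ f i ↔ q ∈ f i) → p = q} where
  toFun φ := ⟨fun i => ⟨{p | i ∈ φ.1 p}, fun _ _ hab ha => φ.2.1 hab ha⟩,
    fun p q h => φ.2.2 (Finset.ext fun i => h i)⟩
  invFun f := ⟨fun p => Finset.univ.filter (fun i => p ∈ f.1 i), by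
    constructor
    · intro p q hpq i hi
      simp only [Finset.mem_filter, Finset.mem_univ, true_and] at hi ⊢
      exact (f.1 i).upper hpq hi
    · intro p q h
      refine f.2 p q fun i => ?_
      have := Finset.ext_iff.1 h i
      simpa using this⟩
  left_inv φ := by
    ext p i
    simp [← SetLike.mem_coe]
  right_inv f := by
    ext i p
    simp [← SetLike.mem_coe]

open Classical in
theorem card_nonsep_le (P : Type) [Fintype P] [PartialOrder P] [Fintype (UpperSet P)] (n : ℕ) :
    (Finset.univ.filter (fun f : Fin n → UpperSet P =>
      ¬ ∀ p q, (∀ i, p ∈ f i ↔ q ∈ f i) → p = q)).card ≤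
    Fintype.card P ^ 2 * (Fintype.card (UpperSet P) - 1) ^ n := by
  let D : Finset (P × P) := Finset.univ.filter (fun x => x.1 ≠ x.2)
  have hD : D.card ≤ Fintype.card P ^ 2 := by
    refine (Finset.card_le_univ D).trans ?_
    rw [Fintype.card_prod, sq]
  let G : P × P → Finset (UpperSet P) := fun x => Finset.univ.filter (fun U => x.1 ∈ U ↔ x.2 ∈ U)
  have hG : ∀ x ∈ D, (G x).card ≤ Fintype.card (UpperSet P) - 1 := by
    rintro ⟨p, q⟩ hx
    have hne : p ≠ q := by simpa [D] using hx
    refine Nat.le_sub_one_of_lt ?_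
    have : ∃ U : UpperSet P, ¬ (p ∈ U ↔ q ∈ U) := by
      by_cases h : p ≤ q
      · refine ⟨UpperSet.Ici q, fun h' => hne (le_antisymm h ?_)⟩
        simpa using h'
      · refine ⟨UpperSet.Ici p, fun h' => h ?_⟩
        simpa using h'
    obtain ⟨U, hU⟩ := this
    rw [← Finset.card_univ]
    refine Finset.card_lt_card ((Finset.ssubset_univ_iff).2 fun he => hU ?_)
    have : U ∈ G (p, q) := he ▸ Finset.mem_univ U
    simpa [G] using this
  have hsub : (Finset.univ.filter (fun f : Fin n → UpperSet P =>
      ¬ ∀ p q, (∀ i, p ∈ f i ↔ q ∈ f i) → p = q)) ⊆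
      D.biUnion (fun x => Fintype.piFinset (fun _ : Fin n => G x)) := by
    intro f hf
    simp only [Finset.mem_filter, Finset.mem_univ, true_and] at hf
    push Not at hf
    obtain ⟨p, q, h, hne⟩ := hf
    refine Finset.mem_biUnion.2 ⟨(p, q), by simpa [D] using hne, ?_⟩
    refine Fintype.mem_piFinset.2 fun i => ?_
    simpa [G] using h i
  refine (Finset.card_le_card hsub).trans ?_
  refine (Finset.card_biUnion_le_card_mul D _ ((Fintype.card (UpperSet P) - 1) ^ n) ?_).trans
    (Nat.mul_le_mul_right _ hD)
  intro x hx
  rw [Fintype.card_piFinset]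
  simpa using Nat.pow_le_pow_left (hG x hx) n

/-- Counting injective poset homomorphisms from a fixed finite nonempty poset `P` into the
Boolean lattice `𝒫(n)` (modelled as `Finset (Fin n)` ordered by inclusion):
with `m = a(P)` the number of antichains of `P`, there is a constant `C > 0` with
`| |inj-hom_P(𝒫(n))| - m^n | ≤ C (m-1)^n` for all `n ≥ 1`. -/
theorem stmt0 (P : Type) [Fintype P] [PartialOrder P] [Nonempty P] :
    ∃ C : ℝ, 0 < C ∧ ∀ n : ℕ, 1 ≤ n →
      |(Nat.card {φ : P → Finset (Fin n) // Monotone φ ∧ Function.Injective φ} : ℝ) -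
          ((antichains P).card : ℝ) ^ n| ≤
        C * (((antichains P).card : ℝ) - 1) ^ n := by
  classical
  have : Fintype (UpperSet P) := Fintype.ofFinite _
  refine ⟨(Fintype.card P : ℝ) ^ 2, by have := Fintype.card_pos (α := P); positivity, ?_⟩
  intro n _
  rw [Nat.card_congr (injHomEquiv P n), antichains_card_eq, Nat.card_eq_fintype_card,
    Nat.card_eq_fintype_card, Fintype.card_subtype]
  have h1 := card_nonsep_le P n
  have h2 := Finset.card_filter_add_card_filter_not (s := Finset.univ)
    (fun f : Fin n → UpperSet P => ∀ p q, (∀ i, p ∈ f i ↔ q ∈ f i) → p = q)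
  rw [Finset.card_univ, Fintype.card_fun, Fintype.card_fin] at h2
  have hpos : 1 ≤ Fintype.card (UpperSet P) := Fintype.card_pos
  have h1' : ((Finset.univ.filter (fun f : Fin n → UpperSet P =>
      ¬ ∀ p q, (∀ i, p ∈ f i ↔ q ∈ f i) → p = q)).card : ℝ) ≤
    (Fintype.card P : ℝ) ^ 2 * ((Fintype.card (UpperSet P) : ℝ) - 1) ^ n := by
    have := (Nat.cast_le (α := ℝ)).2 h1
    rw [Nat.cast_mul, Nat.cast_pow, Nat.cast_pow, Nat.cast_sub hpos, Nat.cast_one] at this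
    exact this
  have h2' := congrArg (Nat.cast (R := ℝ)) h2
  rw [Nat.cast_add, Nat.cast_pow] at h2'
  rw [← h2', sub_add_cancel_left, abs_neg, Nat.abs_cast]
  exact h1'
end

section
/- Let P be a finite poset with a(P) = m. For every n ≥ 1 there exists an injective map from hom_P(𝒫(n)) into [m]^[n], the set of ordered m-partitions of [n]; in particular, the number of poset homomorphisms from P to 𝒫(n) satisfies |hom_P(𝒫(n))| ≤ m^n. -/
open Classical in
/-- The antichain of minimal elements `p` with `x ∈ φ p`. -/
noncomputable def minAnti {P : Type} [Fintype P] [PartialOrder P] {n : ℕ}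
    (φ : P → Finset (Fin n)) (x : Fin n) : Finset P :=
  Finset.univ.filter (fun p => Minimal (fun q => x ∈ φ q) p)

theorem minAnti_mem {P : Type} [Fintype P] [PartialOrder P] {n : ℕ}
    (φ : P → Finset (Fin n)) (x : Fin n) : minAnti φ x ∈ antichains P := by
  classical
  simp only [antichains, Finset.mem_filter, Finset.mem_univ, true_and]
  intro a ha b hb hab hle
  simp only [minAnti, Finset.coe_filter, Finset.mem_univ, true_and, Set.mem_setOf_eq] at ha hb
  exact hab (le_antisymm hle (hb.2 ha.1 hle))

theorem mem_iff_minAnti {P : Type} [Fintype P] [PartialOrder P] {n : ℕ}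
    (φ : P → Finset (Fin n)) (hφ : Monotone φ) (x : Fin n) (p : P) :
    x ∈ φ p ↔ ∃ q ∈ minAnti φ x, q ≤ p := by
  classical
  constructor
  · intro h
    obtain ⟨q, hq, hm⟩ := (Set.toFinite {q | x ∈ φ q}).exists_le_minimal h
    exact ⟨q, by simpa [minAnti] using hm, hq⟩
  · rintro ⟨q, hq, hle⟩
    simp only [minAnti, Finset.mem_filter, Finset.mem_univ, true_and] at hq
    exact hφ hle hq.1

theorem minAnti_inj {P : Type} [Fintype P] [PartialOrder P] {n : ℕ} :
    Function.Injective (fun (φ : {φ : P → Finset (Fin n) // Monotone φ}) (x : Fin n) =>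
      (⟨minAnti φ.1 x, minAnti_mem φ.1 x⟩ : antichains P)) := by
  intro φ ψ h
  ext p x
  have hx : minAnti φ.1 x = minAnti ψ.1 x := congrArg Subtype.val (congrFun h x)
  rw [mem_iff_minAnti φ.1 φ.2, mem_iff_minAnti ψ.1 ψ.2, hx]

/-- Let `P` be a finite poset with `a(P) = m` antichains. For every `n ≥ 1` there is an
injection from the set `hom_P(𝒫(n))` of poset homomorphisms (monotone maps) from `P` to
`𝒫(n)` (modelled as `Finset (Fin n)` ordered by inclusion) into the set `[m]^[n]` of ordered
`m`-partitions of `[n]` (indexed tuples of pairwise disjoint, possibly empty, subsets of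
`[n]` covering `[n]`); in particular `|hom_P(𝒫(n))| ≤ m ^ n`. -/
theorem stmt2 (P : Type) [Fintype P] [PartialOrder P] (n : ℕ) (hn : 1 ≤ n) :
    (∃ f : {φ : P → Finset (Fin n) // Monotone φ} →
        {A : Fin ((antichains P).card) → Finset (Fin n) //
          (∀ i j, i ≠ j → Disjoint (A i) (A j)) ∧ ∀ x : Fin n, ∃ i, x ∈ A i},
      Function.Injective f) ∧
    Nat.card {φ : P → Finset (Fin n) // Monotone φ} ≤ (antichains P).card ^ n := by
  classical
  refine ⟨?_, ?_⟩
  · let e := (antichains P).equivFin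
    refine ⟨fun φ => ⟨fun i => Finset.univ.filter
      (fun x => e ⟨minAnti φ.1 x, minAnti_mem φ.1 x⟩ = i), ?_, ?_⟩, ?_⟩
    · intro i j hij
      rw [Finset.disjoint_left]
      intro x hx hy
      simp only [Finset.mem_filter, Finset.mem_univ, true_and] at hx hy
      exact hij (hx.symm.trans hy)
    · intro x
      exact ⟨_, by simp only [Finset.mem_filter, Finset.mem_univ, true_and]; rfl⟩
    · intro φ ψ h
      apply minAnti_inj
      funext x
      have h1 := congrFun (congrArg Subtype.val h) (e ⟨minAnti φ.1 x, minAnti_mem φ.1 x⟩)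
      have h2 := (Finset.ext_iff.mp h1 x).mp (by simp)
      simp only [Finset.mem_filter, Finset.mem_univ, true_and] at h2
      exact (e.injective h2).symm
  · have h := Nat.card_le_card_of_injective _ (minAnti_inj (P := P) (n := n))
    simpa using h
end

section
/- Let P be a finite poset with a(P) = m, with antichains enumerated as 𝒜(P) = {S_1,…,S_m} where S_m = ∅. Then: (a) for every ordered m-partition A = (A_1,…,A_m) of [n] in which every part A_j is nonempty, the map f_2(A) : P → 𝒫(n), f_2(A)(i) := ⋃{A_j : S_j ∩ D(i) ≠ ∅}, is an injective poset homomorphism from P to 𝒫(n), and moreover for all x, y ∈ P one has f_2(A)(x) ⊆ f_2(A)(y) if and only if x ≤_P y (so the image of f_2(A) is an induced copy of P in 𝒫(n)); and (b) the map A ↦ f_2(A) is injective on [m]^[n]_⋆. -/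
/-- Let `P` be a finite poset whose antichains are enumerated (bijectively) as
`S 0, …, S (m-1)` with the last one empty.  For an ordered `m`-partition
`A = (A 0, …, A (m-1))` of `[n]` define `f₂(A) : P → 𝒫(n)` by
`f₂(A)(i) := ⋃ { A j : S j ∩ D(i) ≠ ∅ }` where `D(i) = {i' : i' ≤ i}`.  Then:
(a) if every part of `A` is nonempty, `f₂(A)` is an injective poset homomorphism whose image
is an induced copy of `P` in `𝒫(n)` (`f₂(A) x ⊆ f₂(A) y ↔ x ≤ y`); and
(b) `A ↦ f₂(A)` is injective on partitions with all parts nonempty. -/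
theorem stmt3 (P : Type) [Fintype P] [PartialOrder P] (n m : ℕ) (hm : 0 < m)
    (S : Fin m → Finset P)
    (hSsurj : ∀ A : Finset P, IsAntichain (· ≤ ·) (A : Set P) ↔ ∃ j, S j = A)
    (hSinj : Function.Injective S)
    (hSlast : S ⟨m - 1, by omega⟩ = ∅) :
    letI f₂ : (Fin m → Finset (Fin n)) → P → Set (Fin n) :=
      fun A i => ⋃ j, ⋃ (_ : ∃ p ∈ S j, p ≤ i), (A j : Set (Fin n))
    (∀ A : Fin m → Finset (Fin n),
        (∀ i j, i ≠ j → Disjoint (A i) (A j)) → (∀ x : Fin n, ∃ j, x ∈ A j) →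
        (∀ j, (A j).Nonempty) →
        Function.Injective (f₂ A) ∧ (∀ x y : P, f₂ A x ⊆ f₂ A y ↔ x ≤ y)) ∧
    (∀ A B : Fin m → Finset (Fin n),
        ((∀ i j, i ≠ j → Disjoint (A i) (A j)) ∧ (∀ x : Fin n, ∃ j, x ∈ A j) ∧
          ∀ j, (A j).Nonempty) →
        ((∀ i j, i ≠ j → Disjoint (B i) (B j)) ∧ (∀ x : Fin n, ∃ j, x ∈ B j) ∧
          ∀ j, (B j).Nonempty) →
        f₂ A = f₂ B → A = B) := by
  set f₂ : (Fin m → Finset (Fin n)) → P → Set (Fin n) :=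
    fun A i => ⋃ j, ⋃ (_ : ∃ p ∈ S j, p ≤ i), (A j : Set (Fin n)) with hf₂
  have key : ∀ A : Fin m → Finset (Fin n), (∀ i j, i ≠ j → Disjoint (A i) (A j)) →
      ∀ j x, x ∈ A j → ∀ i, (x ∈ f₂ A i ↔ ∃ p ∈ S j, p ≤ i) := by
    intro A hd j x hx i
    simp only [f₂, Set.mem_iUnion, Finset.mem_coe, exists_prop]
    constructor
    · rintro ⟨k, hk, hxk⟩
      by_cases h : j = k
      · rw [h]; exact hk
      · exact absurd hxk (Finset.disjoint_left.mp (hd j k h) hx)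
    · intro h
      exact ⟨j, h, hx⟩
  have hsub : ∀ j k, (∀ i, (∃ p ∈ S j, p ≤ i) ↔ ∃ p ∈ S k, p ≤ i) → S j ⊆ S k := by
    intro j k h p hp
    obtain ⟨q, hq, hqp⟩ := (h p).1 ⟨p, hp, le_rfl⟩
    obtain ⟨r, hr, hrq⟩ := (h q).2 ⟨q, hq, le_rfl⟩
    have hrp : r = p := ((hSsurj (S j)).2 ⟨j, rfl⟩).eq hr hp (hrq.trans hqp)
    have hpq : p = q := le_antisymm (hrp ▸ hrq) hqp
    rw [hpq]; exact hq
  have hle : ∀ A B : Fin m → Finset (Fin n), (∀ i j, i ≠ j → Disjoint (A i) (A j)) →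
      (∀ i j, i ≠ j → Disjoint (B i) (B j)) → (∀ x : Fin n, ∃ j, x ∈ B j) →
      f₂ A = f₂ B → ∀ j, A j ⊆ B j := by
    intro A B hA hB hc hf j x hx
    obtain ⟨k, hk⟩ := hc x
    have h : ∀ i, (∃ p ∈ S j, p ≤ i) ↔ ∃ p ∈ S k, p ≤ i := by
      intro i
      rw [← key A hA j x hx i, ← key B hB k x hk i, hf]
    have hjk : j = k :=
      hSinj (Finset.Subset.antisymm (hsub j k h) (hsub k j (fun i => (h i).symm)))
    rw [hjk]; exact hk
  refine ⟨?_, ?_⟩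
  · intro A hd hc hne
    have hiff : ∀ x y : P, f₂ A x ⊆ f₂ A y ↔ x ≤ y := by
      intro x y
      constructor
      · intro h
        obtain ⟨j, hj⟩ := (hSsurj {x}).1 (by simp)
        obtain ⟨a, ha⟩ := hne j
        have h1 := (key A hd j a ha y).1
          (h ((key A hd j a ha x).2 ⟨x, by simp [hj], le_rfl⟩))
        simpa [hj] using h1
      · intro hxy a ha
        obtain ⟨j, hj⟩ := hc a
        obtain ⟨p, hp, hpx⟩ := (key A hd j a hj x).1 ha
        exact (key A hd j a hj y).2 ⟨p, hp, hpx.trans hxy⟩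
    exact ⟨fun x y h => le_antisymm ((hiff x y).1 h.subset) ((hiff y x).1 h.symm.subset), hiff⟩
  · rintro A B ⟨hA, hcA, -⟩ ⟨hB, hcB, -⟩ hf
    funext j
    exact Finset.Subset.antisymm (hle A B hA hB hcB hf j) (hle B A hB hA hcA hf.symm j)
end

section
/- Let P be a finite poset with antichains enumerated as 𝒜(P) = {S_1,…,S_m} (S_m = ∅), and let Q be a nonempty subset of P with the induced order and with antichains enumerated as 𝒜(Q) = {T_1,…,T_M} (T_M = ∅). For an ordered m-partition A = (A_1,…,A_m) of [n], define the Q-shadow partition ∂_Q(A) := (B_1,…,B_M) by B_k := ⋃_{j : ∂_Q S_j = T_k} A_j. Then ∂_Q(A) is an ordered M-partition of [n], and the restriction to Q of the map f_2 constructed from A for P coincides with the map f_2 constructed from ∂_Q(A) for Q; that is, for every i ∈ Q, ⋃{A_j : S_j ∩ D_P(i) ≠ ∅} = ⋃{B_k : T_k ∩ D_Q(i) ≠ ∅}, where D_P(i) = {i' ∈ P : i' ≤_P i} and D_Q(i) = Q ∩ D_P(i). -/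
/-- The upper shadow `∂_Q S` of an antichain `S` of `P` inside a subset `Q ⊆ P`. -/
def upperShadow {P : Type*} [PartialOrder P] (Q : Set P) (S : Set P) : Set P :=
  {y | y ∈ Q ∧ (∃ x ∈ S, x ≤ y) ∧ ∀ z ∈ Q, z < y → ∀ x ∈ S, ¬ x ≤ z}

/-- Let `P` be a finite poset with antichains enumerated bijectively as `S 0, …, S (m-1)`
(`S` last empty), and let `Q ⊆ P` be nonempty with its antichains (antichains of `P`
contained in `Q`) enumerated bijectively as `T 0, …, T (M-1)` (`T` last empty).  For an
ordered `m`-partition `A` of `[n]`, the `Q`-shadow `∂_Q(A) = B` given by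
`B k = ⋃ { A j : ∂_Q (S j) = T k }` is an ordered `M`-partition of `[n]`, and the map
`f₂` built from `A` for `P`, restricted to `Q`, coincides with the map `f₂` built from
`B` for `Q`: for all `i ∈ Q`,
`⋃ {A j : S j ∩ D_P(i) ≠ ∅} = ⋃ {B k : T k ∩ D_Q(i) ≠ ∅}`. -/
theorem stmt4 (P : Type) [Fintype P] [PartialOrder P]
    (Q : Set P) (hQ : Q.Nonempty) (n m M : ℕ) (hm : 0 < m) (hM : 0 < M)
    (S : Fin m → Finset P)
    (hSsurj : ∀ A : Finset P, IsAntichain (· ≤ ·) (A : Set P) ↔ ∃ j, S j = A)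
    (hSinj : Function.Injective S)
    (hSlast : S ⟨m - 1, by omega⟩ = ∅)
    (T : Fin M → Finset P)
    (hTsurj : ∀ A : Finset P,
      ((A : Set P) ⊆ Q ∧ IsAntichain (· ≤ ·) (A : Set P)) ↔ ∃ k, T k = A)
    (hTinj : Function.Injective T)
    (hTlast : T ⟨M - 1, by omega⟩ = ∅)
    (A : Fin m → Finset (Fin n))
    (hdisj : ∀ i j, i ≠ j → Disjoint (A i) (A j))
    (hcover : ∀ x : Fin n, ∃ j, x ∈ A j) :
    letI B : Fin M → Set (Fin n) :=
      fun k => ⋃ j, ⋃ (_ : upperShadow Q (S j : Set P) = (T k : Set P)), (A j : Set (Fin n))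
    ((∀ k k', k ≠ k' → Disjoint (B k) (B k')) ∧ (⋃ k, B k) = Set.univ) ∧
    (∀ i ∈ Q,
      (⋃ j, ⋃ (_ : ∃ p ∈ S j, p ≤ i), (A j : Set (Fin n))) =
        (⋃ k, ⋃ (_ : ∃ p ∈ T k, p ≤ i), B k)) := by
  classical
  have key : ∀ (j : Fin m) (i : P), i ∈ Q →
      ((∃ p ∈ S j, p ≤ i) ↔ ∃ p ∈ upperShadow Q (S j : Set P), p ≤ i) := by
    intro j i hi
    constructor
    · rintro ⟨x, hx, hxi⟩
      obtain ⟨y, hyi, hy⟩ := Set.Finite.exists_le_minimal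
        (s := {y | y ∈ Q ∧ ∃ x ∈ S j, x ≤ y}) (Set.toFinite _)
        (a := i) ⟨hi, x, hx, hxi⟩
      refine ⟨y, ⟨hy.1.1, hy.1.2, ?_⟩, hyi⟩
      intro z hz hzy w hw hwz
      exact absurd (hy.2 ⟨hz, w, hw, hwz⟩ hzy.le) (not_le_of_gt hzy)
    · rintro ⟨y, ⟨_, ⟨x, hx, hxy⟩, _⟩, hyi⟩
      exact ⟨x, hx, hxy.trans hyi⟩
  have ex : ∀ j : Fin m, ∃ k, upperShadow Q (S j : Set P) = (T k : Set P) := by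
    intro j
    obtain ⟨k, hk⟩ := (hTsurj (upperShadow Q (S j : Set P)).toFinset).1 (by
      rw [Set.coe_toFinset]
      refine ⟨fun y hy => hy.1, ?_⟩
      intro a ha b hb hab hle
      obtain ⟨x, hx, hxa⟩ := ha.2.1
      exact hb.2.2 a ha.1 (lt_of_le_of_ne hle hab) x hx hxa)
    exact ⟨k, by rw [hk, Set.coe_toFinset]⟩
  refine ⟨⟨?_, ?_⟩, ?_⟩
  · intro k k' hkk
    rw [Set.disjoint_left]
    intro x hx hx'
    simp only [Set.mem_iUnion, Finset.mem_coe] at hx hx'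
    obtain ⟨j, hj, hxj⟩ := hx
    obtain ⟨j', hj', hxj'⟩ := hx'
    have hjj : j = j' := by
      by_contra h
      exact Finset.disjoint_left.1 (hdisj j j' h) hxj hxj'
    subst hjj
    exact hkk (hTinj (Finset.coe_injective (hj.symm.trans hj')))
  · rw [Set.eq_univ_iff_forall]
    intro x
    obtain ⟨j, hj⟩ := hcover x
    obtain ⟨k, hk⟩ := ex j
    simp only [Set.mem_iUnion, Finset.mem_coe]
    exact ⟨k, j, hk, hj⟩
  · intro i hi
    ext x
    simp only [Set.mem_iUnion, Finset.mem_coe]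
    constructor
    · rintro ⟨j, hp, hx⟩
      obtain ⟨k, hk⟩ := ex j
      have h := (key j i hi).1 hp
      rw [hk] at h
      exact ⟨k, h, j, hk, hx⟩
    · rintro ⟨k, hp, j, hk, hx⟩
      refine ⟨j, (key j i hi).2 ?_, hx⟩
      rw [hk]
      exact hp
end

section
/- Let P be a finite nonempty poset and let c > c_⋆(P) be a fixed real number. Set p = p(n) = e^{−c·n}. Then with high probability P is not a subposet of the random poset (𝒫(n,p), ⊆); that is, the probability that there exists an injective poset homomorphism from P into the poset of elements of 𝒫(n,p) ordered by inclusion tends to 0 as n → ∞. -/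
open Classical in
/-- The antichains of the subposet `Q ⊆ P`, i.e. antichains of `P` contained in `Q`. -/
noncomputable def antichainsIn {P : Type*} [Fintype P] [PartialOrder P] (Q : Set P) :
    Finset (Finset P) :=
  (antichains P).filter (fun A => (A : Set P) ⊆ Q)

/-- A weighting `α ∈ Δ_{a(P)}`: a nonnegative function on the antichains of `P`
(extended by `0` off the antichains) summing to `1`. -/
def IsWeighting {P : Type*} [Fintype P] [PartialOrder P] (α : Finset P → ℝ) : Prop :=
  (∀ A ∈ antichains P, 0 ≤ α A) ∧ (∀ A ∉ antichains P, α A = 0) ∧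
    ∑ A ∈ antichains P, α A = 1

open Classical in
/-- The shadow weighting `∂_Q(α)`: the coordinate of `∂_Q(α)` at an antichain `T` of `Q`
is the sum of `α` over all antichains of `P` whose upper shadow in `Q` is `T`. -/
noncomputable def shadowWeight {P : Type*} [Fintype P] [PartialOrder P]
    (α : Finset P → ℝ) (Q : Set P) (T : Finset P) : ℝ :=
  ∑ A ∈ (antichains P).filter (fun B : Finset P => upperShadow Q (B : Set P) = (T : Set P)), α A

/-- The critical exponent `c_{α,P}(Q) = H_{a(Q)}(∂_Q(α)) / |Q|` of a subposet `Q` of `P`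
with respect to a weighting `α` (natural logarithm; `0 log 0 = 0`). -/
noncomputable def critExp {P : Type*} [Fintype P] [PartialOrder P]
    (α : Finset P → ℝ) (Q : Set P) : ℝ :=
  (∑ T ∈ antichainsIn Q, -(shadowWeight α Q T * Real.log (shadowWeight α Q T))) /
    (Q.ncard : ℝ)

/-- The critical exponent `c_⋆(P) = max_{α ∈ Δ_{a(P)}} min_{∅ ≠ Q ⊆ P} c_{α,P}(Q)`,
expressed as `sup {c ≥ 0 : ∃ α ∈ Δ_{a(P)}, ∀ ∅ ≠ Q ⊆ P, c ≤ c_{α,P}(Q)}`. -/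
noncomputable def critStar (P : Type*) [Fintype P] [PartialOrder P] : ℝ :=
  sSup {c : ℝ | 0 ≤ c ∧ ∃ α : Finset P → ℝ, IsWeighting α ∧
    ∀ Q : Set P, Q.Nonempty → c ≤ critExp α Q}

open Classical in
/-- The probability, under the product of Bernoulli(`p`) measures on `{0,1}^{𝒫(n)}`
(each element of `𝒫(n)` retained independently with probability `p`), of an event `E`. -/
noncomputable def cubeProb (n : ℕ) (p : ℝ) (E : Set (Finset (Fin n) → Bool)) : ℝ :=
  ∑ ω ∈ Finset.univ.filter (fun ω : Finset (Fin n) → Bool => ω ∈ E),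
    ∏ X : Finset (Fin n), (if ω X = true then p else 1 - p)

namespace Stmt6

open Finset

/-- empirical distribution -/
noncomputable def emp {T : Type*} [DecidableEq T] {n : ℕ} (g : Fin n → T) (t : T) : ℝ :=
  ((univ.filter (fun i => g i = t)).card : ℝ) / n

noncomputable def ent {T : Type*} [Fintype T] (b : T → ℝ) : ℝ :=
  ∑ t, -(b t * Real.log (b t))

lemma emp_nonneg {T : Type*} [DecidableEq T] {n : ℕ} (g : Fin n → T) (t : T) : 0 ≤ emp g t := by
  unfold emp; positivity

lemma sum_emp {T : Type*} [Fintype T] [DecidableEq T] {n : ℕ} (hn : 0 < n) (g : Fin n → T) :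
    ∑ t, emp g t = 1 := by
  unfold emp
  rw [← Finset.sum_div, ← Nat.cast_sum]
  have := Finset.card_eq_sum_card_fiberwise (f := g) (s := univ) (t := univ) (by simp)
  rw [← this]
  simp; positivity

lemma prod_emp {T : Type*} [Fintype T] [DecidableEq T] {n : ℕ} (hn : 0 < n) (g : Fin n → T) :
    ∏ i, emp g (g i) = Real.exp (-(n * ent (emp g))) := by
  have hpos : ∀ i, 0 < emp g (g i) := by
    intro i
    unfold emp
    have : 0 < (univ.filter (fun j => g j = g i)).card := Finset.card_pos.2 ⟨i, by simp⟩
    positivity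
  have h1 : ∏ i, emp g (g i) = Real.exp (∑ i, Real.log (emp g (g i))) := by
    rw [Real.exp_sum]
    exact Finset.prod_congr rfl (fun i _ => (Real.exp_log (hpos i)).symm)
  rw [h1]
  congr 1
  have h2 : ∑ i, Real.log (emp g (g i)) = ∑ t, ∑ i with g i = t, Real.log (emp g (g i)) :=
    (Finset.sum_fiberwise _ _ _).symm
  rw [h2]
  unfold ent
  rw [Finset.mul_sum, ← Finset.sum_neg_distrib]
  refine Finset.sum_congr rfl (fun t _ => ?_)
  have h3 : ∑ i with g i = t, Real.log (emp g (g i)) = ∑ i with g i = t, Real.log (emp g t) := by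
    refine Finset.sum_congr rfl (fun i hi => ?_)
    rw [(Finset.mem_filter.1 hi).2]
  rw [h3, Finset.sum_const, nsmul_eq_mul]
  have hn' : (n : ℝ) ≠ 0 := by positivity
  have : ((univ.filter (fun i => g i = t)).card : ℝ) = n * emp g t := by
    unfold emp; field_simp
  rw [this]; ring

lemma card_type {T : Type*} [Fintype T] [DecidableEq T] {n : ℕ} (hn : 0 < n) (M : ℝ)
    (s : Finset (Fin n → T)) (hs : ∀ g ∈ s, n * ent (emp g) ≤ M)
    (hsame : ∀ g ∈ s, ∀ h ∈ s, emp g = emp h) : (s.card : ℝ) ≤ Real.exp M := by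
  rcases s.eq_empty_or_nonempty with rfl | ⟨g0, hg0⟩
  · simp; positivity
  have h1 : ∑ g ∈ s, Real.exp (-M) ≤ ∑ g : Fin n → T, ∏ i, emp g0 (g i) := by
    refine le_trans ?_ (Finset.sum_le_sum_of_subset_of_nonneg (Finset.subset_univ s)
      (fun g _ _ => Finset.prod_nonneg (fun i _ => emp_nonneg _ _)))
    refine Finset.sum_le_sum (fun g hg => ?_)
    rw [hsame g0 hg0 g hg, prod_emp hn]
    apply Real.exp_le_exp.2
    linarith [hs g hg]
  have h2 : ∑ g : Fin n → T, ∏ i, emp g0 (g i) = 1 := by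
    have := Finset.prod_univ_sum (fun _ : Fin n => (univ : Finset T)) (fun _ t => emp g0 t)
    rw [Fintype.piFinset_univ] at this
    rw [← this]
    simp [sum_emp hn]
  rw [h2, Finset.sum_const, nsmul_eq_mul, Real.exp_neg] at h1
  have := Real.exp_pos M
  rwa [← div_eq_mul_inv, div_le_one this] at h1

lemma card_low {T : Type*} [Fintype T] [DecidableEq T] {n : ℕ} (hn : 0 < n) (M : ℝ)
    (s : Finset (Fin n → T)) (hs : ∀ g ∈ s, n * ent (emp g) ≤ M) :
    (s.card : ℝ) ≤ ((n : ℝ) + 1) ^ (Fintype.card T) * Real.exp M := by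
  classical
  let cnt : (Fin n → T) → (T → Fin (n+1)) := fun g t =>
    ⟨(univ.filter (fun i => g i = t)).card, by
      have := Finset.card_le_univ (univ.filter (fun i => g i = t))
      simp only [Fintype.card_fin] at this
      omega⟩
  have h1 := Finset.card_eq_sum_card_fiberwise (f := cnt) (s := s) (t := univ) (by simp)
  rw [h1, Nat.cast_sum]
  refine le_trans (Finset.sum_le_card_nsmul univ _ (Real.exp M) (fun k _ => ?_)) ?_
  · apply card_type hn
    · intro g hg; exact hs g (Finset.mem_filter.1 hg).1
    · intro g hg h hh
      have : cnt g = cnt h := (Finset.mem_filter.1 hg).2.trans (Finset.mem_filter.1 hh).2.symm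
      funext t
      have := congrArg Fin.val (congrFun this t)
      simp only [cnt] at this
      unfold emp
      rw [this]
  · simp

lemma weight_nonneg {n : ℕ} {p : ℝ} (h0 : 0 ≤ p) (h1 : p ≤ 1) (ω : Finset (Fin n) → Bool) :
    0 ≤ ∏ X : Finset (Fin n), (if ω X = true then p else 1 - p) := by
  refine Finset.prod_nonneg (fun X _ => ?_)
  split_ifs <;> linarith

lemma cubeProb_nonneg {n : ℕ} {p : ℝ} (h0 : 0 ≤ p) (h1 : p ≤ 1) (E) : 0 ≤ cubeProb n p E :=
  Finset.sum_nonneg (fun ω _ => weight_nonneg h0 h1 ω)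

lemma cubeProb_union {n : ℕ} {p : ℝ} (h0 : 0 ≤ p) (h1 : p ≤ 1)
    {J : Type*} (s : Finset J) (F : J → Set (Finset (Fin n) → Bool)) (E)
    (hE : ∀ ω ∈ E, ∃ j ∈ s, ω ∈ F j) : cubeProb n p E ≤ ∑ j ∈ s, cubeProb n p (F j) := by
  classical
  unfold cubeProb
  simp only [Finset.sum_filter]
  rw [Finset.sum_comm]
  refine Finset.sum_le_sum (fun ω _ => ?_)
  have hnn : ∀ j ∈ s, 0 ≤ (if ω ∈ F j then
      ∏ X : Finset (Fin n), (if ω X = true then p else 1 - p) else 0) := by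
    intro j _
    split_ifs with h
    · exact weight_nonneg h0 h1 ω
    · exact le_rfl
  by_cases hω : ω ∈ E
  · obtain ⟨j, hj, hjF⟩ := hE ω hω
    refine le_trans ?_ (Finset.single_le_sum hnn hj)
    rw [if_pos hω, if_pos hjF]
  · rw [if_neg hω]
    exact Finset.sum_nonneg hnn

lemma cubeProb_all {n : ℕ} (p : ℝ) (S : Finset (Finset (Fin n))) :
    cubeProb n p {ω | ∀ X ∈ S, ω X = true} = p ^ S.card := by
  classical
  unfold cubeProb
  trans ∑ ω ∈ Fintype.piFinset (fun X => if X ∈ S then ({true} : Finset Bool) else univ),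
    ∏ X : Finset (Fin n), (if ω X = true then p else 1 - p)
  · refine Finset.sum_congr ?_ (fun _ _ => rfl)
    ext ω
    simp only [Finset.mem_filter, Finset.mem_univ, true_and, Set.mem_ofPred_eq,
      Fintype.mem_piFinset]
    refine forall_congr' (fun X => ?_)
    by_cases h : X ∈ S <;> simp [h]
  rw [← Finset.prod_univ_sum (fun X => if X ∈ S then {true} else univ)
    (fun _ b => if b = true then p else 1 - p)]
  have : ∀ X : Finset (Fin n), (∑ b ∈ (if X ∈ S then ({true} : Finset Bool) else univ),
      (if b = true then p else 1 - p)) = if X ∈ S then p else 1 := by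
    intro X
    by_cases h : X ∈ S <;> simp [h]
  simp only [this]
  rw [Finset.prod_ite_mem, Finset.univ_inter, Finset.prod_const]

section poset
variable {P : Type} [Fintype P] [PartialOrder P]

open Classical in
/-- the antichain attached to coordinate `i` -/
noncomputable def minA {n : ℕ} (φ : P → Finset (Fin n)) (i : Fin n) : Finset P :=
  univ.filter (fun x => i ∈ φ x ∧ ∀ y, y < x → i ∉ φ y)

open Classical in
noncomputable def shad (Q : Set P) (A : Finset P) : Finset P := (upperShadow Q (A : Set P)).toFinset

open Classical in
noncomputable def rec' {n : ℕ} (g : Fin n → Finset P) (x : P) : Finset (Fin n) :=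
  univ.filter (fun i => ∃ y ∈ g i, y ≤ x)

lemma minA_mem {n : ℕ} (φ : P → Finset (Fin n)) (i : Fin n) : minA φ i ∈ antichains P := by
  classical
  simp only [antichains, Finset.mem_filter, Finset.mem_univ, true_and]
  intro x hx y hy hne hle
  simp only [minA, Finset.coe_filter, Finset.mem_univ, true_and, Set.mem_ofPred_eq] at hx hy
  exact hy.2 x (lt_of_le_of_ne hle hne) hx.1

lemma shad_mem (Q : Set P) (A : Finset P) : shad Q A ∈ antichainsIn Q := by
  classical
  simp only [antichainsIn, antichains, Finset.mem_filter, Finset.mem_univ, true_and, shad,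
    Set.coe_toFinset]
  refine ⟨?_, fun x hx => hx.1⟩
  intro x hx y hy hne hle
  obtain ⟨a, ha, hax⟩ := hx.2.1
  exact hy.2.2 x hx.1 (lt_of_le_of_ne hle hne) a ha hax

lemma rec_eq {n : ℕ} (φ : P → Finset (Fin n)) (hφ : Monotone φ) (Q : Set P) (x : P) (hx : x ∈ Q) :
    rec' (fun i => shad Q (minA φ i)) x = φ x := by
  classical
  ext i
  simp only [rec', Finset.mem_filter, Finset.mem_univ, true_and, shad, Set.mem_toFinset]
  constructor
  · rintro ⟨y, hy, hyx⟩
    obtain ⟨a, ha, hay⟩ := hy.2.1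
    simp only [minA, Finset.coe_filter, Finset.mem_univ, true_and, Set.mem_ofPred_eq] at ha
    exact hφ (hay.trans hyx) ha.1
  · intro hi
    obtain ⟨a, hax, ha⟩ := (Set.toFinite {x : P | i ∈ φ x}).exists_le_minimal hi
    have haA : a ∈ minA φ i := by
      simp only [minA, Finset.mem_filter, Finset.mem_univ, true_and]
      exact ⟨ha.prop, fun y hy hiy => hy.not_ge (ha.le_of_le hiy hy.le)⟩
    obtain ⟨b, hbx, hb⟩ := (Set.toFinite {z : P | z ∈ Q ∧ ∃ a ∈ minA φ i, a ≤ z}).exists_le_minimal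
      (show x ∈ _ from ⟨hx, a, haA, hax⟩)
    refine ⟨b, ⟨hb.prop.1, hb.prop.2, ?_⟩, hbx⟩
    intro z hz hzb u hu huz
    exact hzb.not_ge (hb.le_of_le ⟨hz, u, hu, huz⟩ hzb.le)

open Classical in
lemma shadow_emp {n : ℕ} (f : Fin n → Finset P) (hf : ∀ i, f i ∈ antichains P) (Q : Set P)
    (T : Finset P) : shadowWeight (emp f) Q T = emp (fun i => shad Q (f i)) T := by
  unfold shadowWeight emp
  rw [← Finset.sum_div, ← Nat.cast_sum]
  congr 2
  rw [Finset.card_eq_sum_card_fiberwise (f := f)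
    (t := (antichains P).filter (fun B : Finset P => upperShadow Q (B : Set P) = (T : Set P)))]
  · refine Finset.sum_congr rfl (fun A hA => ?_)
    congr 1
    ext i
    simp only [Finset.mem_filter, Finset.mem_univ, true_and]
    constructor
    · intro h
      refine ⟨?_, h⟩
      rw [h]
      apply Finset.coe_injective
      rw [shad, Set.coe_toFinset]
      exact (Finset.mem_filter.1 hA).2
    · exact fun h => h.2
  · intro i hi
    simp only [Finset.coe_filter, Finset.mem_univ, true_and, Set.mem_ofPred_eq] at hi ⊢
    refine ⟨hf i, ?_⟩
    rw [← hi, shad, Set.coe_toFinset]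

open Classical in
lemma crit_emp {n : ℕ} (f : Fin n → Finset P) (hf : ∀ i, f i ∈ antichains P) (Q : Set P) :
    critExp (emp f) Q = ent (emp (fun i => shad Q (f i))) / Q.ncard := by
  unfold critExp ent
  congr 1
  simp only [shadow_emp f hf]
  refine Finset.sum_subset (Finset.subset_univ _) (fun T _ hT => ?_)
  have : emp (fun i => shad Q (f i)) T = 0 := by
    unfold emp
    rw [Finset.filter_eq_empty_iff.2]
    · simp
    · intro i _ h
      exact hT (h ▸ shad_mem Q (f i))
  simp [this]

open Classical in
lemma weighting_emp {n : ℕ} (hn : 0 < n) (f : Fin n → Finset P) (hf : ∀ i, f i ∈ antichains P) :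
    IsWeighting (emp f) := by
  have h0 : ∀ A ∉ antichains P, emp f A = 0 := by
    intro A hA
    unfold emp
    rw [Finset.filter_eq_empty_iff.2]
    · simp
    · intro i _ h
      exact hA (h ▸ hf i)
  refine ⟨fun A _ => emp_nonneg _ _, h0, ?_⟩
  rw [← sum_emp hn f]
  exact Finset.sum_subset (Finset.subset_univ _) (fun A _ hA => h0 A hA)

lemma shadowWeight_nonneg {α : Finset P → ℝ} (h : IsWeighting α) (Q : Set P) (T : Finset P) :
    0 ≤ shadowWeight α Q T :=
  Finset.sum_nonneg (fun A hA => h.1 A (Finset.mem_filter.1 hA).1)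

lemma bdd [Nonempty P] : BddAbove {c : ℝ | 0 ≤ c ∧ ∃ α : Finset P → ℝ, IsWeighting α ∧
    ∀ Q : Set P, Q.Nonempty → c ≤ critExp α Q} := by
  refine ⟨(∑ T ∈ antichainsIn (Set.univ : Set P), (1:ℝ)) / ((Set.univ : Set P).ncard : ℝ), ?_⟩
  rintro c ⟨_, α, hα, h⟩
  refine (h Set.univ Set.univ_nonempty).trans ?_
  unfold critExp
  gcongr with T hT
  have hx := shadowWeight_nonneg hα Set.univ T
  rcases hx.eq_or_lt with h0 | h0
  · rw [← h0]; simp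
  · have := Real.log_le_sub_one_of_pos (inv_pos.2 h0)
    rw [Real.log_inv] at this
    have h2 := mul_le_mul_of_nonneg_left this hx
    rw [mul_sub, mul_inv_cancel₀ h0.ne'] at h2
    linarith

lemma critStar_nonneg : 0 ≤ critStar P := Real.sSup_nonneg (fun _ h => h.1)

lemma exists_Q [Nonempty P] {c : ℝ} (hc : critStar P < c) {α : Finset P → ℝ} (hα : IsWeighting α) :
    ∃ Q : Set P, Q.Nonempty ∧ critExp α Q < c := by
  by_contra! hcon
  have : c ≤ critStar P := le_csSup bdd ⟨critStar_nonneg.trans hc.le, α, hα, hcon⟩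
  linarith

lemma main_bound [Nonempty P] {c c' : ℝ} (h1 : critStar P < c') (h2 : c' < c) {n : ℕ} (hn : 0 < n) :
    cubeProb n (Real.exp (-(c * n)))
          {ω : Finset (Fin n) → Bool | ∃ φ : P → Finset (Fin n),
            Function.Injective φ ∧ Monotone φ ∧ ∀ i, ω (φ i) = true} ≤
    Fintype.card (Set P) *
      (((n : ℝ) + 1) ^ (Fintype.card (Finset P)) * Real.exp (-((c - c') * n))) := by
  classical
  have hc0 : 0 ≤ c := (critStar_nonneg (P := P)).trans (h1.le.trans h2.le)
  have hp0 : 0 ≤ Real.exp (-(c * n)) := (Real.exp_pos _).le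
  have hp1 : Real.exp (-(c * n)) ≤ 1 := by
    apply Real.exp_le_one_iff.2
    have : 0 ≤ c * n := by positivity
    linarith
  let G : Set P → Finset (Fin n → Finset P) := fun Q =>
    univ.filter (fun g => ent (emp g) ≤ c' * Q.ncard ∧ Set.InjOn (rec' g) Q)
  let F : Set P → (Fin n → Finset P) → Set (Finset (Fin n) → Bool) := fun Q g =>
    {ω | ∀ X ∈ Q.toFinset.image (rec' g), ω X = true}
  let QQ : Finset (Set P) := univ.filter (fun Q => Q.Nonempty)
  have hU := cubeProb_union hp0 hp1 (QQ.sigma G) (fun j => F j.1 j.2)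
    {ω : Finset (Fin n) → Bool | ∃ φ : P → Finset (Fin n),
            Function.Injective φ ∧ Monotone φ ∧ ∀ i, ω (φ i) = true} (by
    rintro ω ⟨φ, hinj, hmono, hω⟩
    obtain ⟨Q, hQ, hlt⟩ := exists_Q h1 (weighting_emp hn (minA φ) (minA_mem φ))
    have hrec := rec_eq φ hmono Q
    refine ⟨⟨Q, fun i => shad Q (minA φ i)⟩, ?_, ?_⟩
    · simp only [Finset.mem_sigma, QQ, G, Finset.mem_filter, Finset.mem_univ, true_and]
      refine ⟨hQ, ?_, ?_⟩
      · rw [crit_emp _ (minA_mem φ)] at hlt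
        have hpos : (0:ℝ) < Q.ncard := by
          exact_mod_cast (Set.ncard_pos (Set.toFinite Q)).2 hQ
        exact ((div_lt_iff₀ hpos).1 hlt).le
      · intro x hx y hy hxy
        rw [hrec x hx, hrec y hy] at hxy
        exact hinj hxy
    · simp only [F, Set.mem_ofPred_eq, Finset.mem_image, Set.mem_toFinset]
      rintro X ⟨x, hx, rfl⟩
      rw [hrec x hx]
      exact hω x)
  refine hU.trans ?_
  rw [Finset.sum_sigma]
  have hQbound : ∀ Q ∈ QQ, ∑ g ∈ G Q, cubeProb n (Real.exp (-(c * n))) (F Q g) ≤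
      ((n : ℝ) + 1) ^ (Fintype.card (Finset P)) * Real.exp (-((c - c') * n)) := by
    intro Q hQ
    have hQ' : Q.Nonempty := (Finset.mem_filter.1 hQ).2
    have h1Q : (1:ℝ) ≤ Q.ncard := by
      exact_mod_cast (Set.ncard_pos (Set.toFinite Q)).2 hQ'
    have hF : ∀ g ∈ G Q, cubeProb n (Real.exp (-(c * n))) (F Q g) =
        Real.exp (-(c * n * Q.ncard)) := by
      intro g hg
      have hi : Set.InjOn (rec' g) Q := (Finset.mem_filter.1 hg).2.2
      simp only [F]
      rw [cubeProb_all, Finset.card_image_of_injOn (by simpa using hi), ← Real.exp_nat_mul,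
        Set.ncard_eq_toFinset_card']
      congr 1
      ring
    rw [Finset.sum_congr rfl hF, Finset.sum_const, nsmul_eq_mul]
    have hcard := card_low hn (n * (c' * Q.ncard)) (G Q) (by
      intro g hg
      have := (Finset.mem_filter.1 hg).2.1
      gcongr)
    refine (mul_le_mul_of_nonneg_right hcard (Real.exp_pos _).le).trans ?_
    rw [mul_assoc, ← Real.exp_add]
    gcongr
    have : 0 ≤ (c - c') * n * ((Q.ncard : ℝ) - 1) :=
      mul_nonneg (mul_nonneg (by linarith) (by positivity)) (by linarith)
    nlinarith
  refine (Finset.sum_le_card_nsmul _ _ _ hQbound).trans ?_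
  rw [nsmul_eq_mul]
  have : QQ.card ≤ Fintype.card (Set P) := Finset.card_le_univ _
  gcongr

end poset

lemma lim_bound (C : ℝ) (K : ℕ) {d : ℝ} (hd : 0 < d) :
    Filter.Tendsto (fun n : ℕ => C * (((n : ℝ) + 1) ^ K * Real.exp (-(d * n))))
      Filter.atTop (nhds 0) := by
  have h1 : Filter.Tendsto (fun n : ℕ => d * ((n : ℝ) + 1)) Filter.atTop Filter.atTop :=
    Filter.Tendsto.const_mul_atTop hd
      (Filter.tendsto_atTop_add_const_right _ _ tendsto_natCast_atTop_atTop)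
  have h2 := ((Real.tendsto_pow_mul_exp_neg_atTop_nhds_zero K).comp h1).const_mul
    (C * Real.exp d / d ^ K)
  rw [mul_zero] at h2
  refine h2.congr (fun n => ?_)
  simp only [Function.comp]
  have : Real.exp (-(d * (n:ℝ))) = Real.exp d * Real.exp (-(d * ((n:ℝ)+1))) := by
    rw [← Real.exp_add]; congr 1; ring
  rw [this, mul_pow]
  field_simp

end Stmt6

/-- 0-statement of the existence threshold: if `c > c_⋆(P)` and `p = e^{-cn}`, then w.h.p.
the random poset `𝒫(n,p)` contains no copy of `P`, i.e. the probability that there is an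
injective poset homomorphism from `P` into the retained elements of `𝒫(n)` (ordered by
inclusion) tends to `0` as `n → ∞`. -/
theorem stmt6 (P : Type) [Fintype P] [PartialOrder P] [Nonempty P]
    (c : ℝ) (hc : critStar P < c) :
    Filter.Tendsto (fun n : ℕ =>
        cubeProb n (Real.exp (-(c * n)))
          {ω : Finset (Fin n) → Bool | ∃ φ : P → Finset (Fin n),
            Function.Injective φ ∧ Monotone φ ∧ ∀ i, ω (φ i) = true})
      Filter.atTop (nhds 0) := by
  classical
  obtain ⟨c', h1, h2⟩ := exists_between hc
  have hc0 : 0 ≤ c := (Stmt6.critStar_nonneg (P := P)).trans hc.le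
  refine tendsto_of_tendsto_of_tendsto_of_le_of_le' tendsto_const_nhds
    (Stmt6.lim_bound (Fintype.card (Set P)) (Fintype.card (Finset P)) (sub_pos.2 h2)) ?_ ?_
  · refine Filter.Eventually.of_forall (fun n => ?_)
    apply Stmt6.cubeProb_nonneg (Real.exp_pos _).le
    apply Real.exp_le_one_iff.2
    have : 0 ≤ c * n := by positivity
    linarith
  · filter_upwards [Filter.eventually_gt_atTop 0] with n hn
    exact Stmt6.main_bound h1 h2 hn
end

section
/- Let P be a finite nonempty poset and let c be a fixed real number with 0 < c < c_⋆(P). Set p = p(n) = e^{−c·n}. Then with high probability P is an induced subposet of the random poset (𝒫(n,p), ⊆); that is, the probability that there exists an injective map φ : P → 𝒫(n,p) such that for all x, y ∈ P, φ(x) ⊆ φ(y) if and only if x ≤_P y, tends to 1 as n → ∞. -/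
open Classical in
noncomputable def shF {P : Type} [Fintype P] [PartialOrder P] (Q A : Finset P) : Finset P :=
  Finset.univ.filter (fun y => y ∈ upperShadow (Q : Set P) (A : Set P))

noncomputable def bw {P : Type} [Fintype P] [PartialOrder P] (α : Finset P → ℝ)
    (Q A : Finset P) : ℝ :=
  shadowWeight α (Q : Set P) (shF Q A)

open Classical in
noncomputable def phi {P : Type} [PartialOrder P] {n : ℕ} (f : Fin n → Finset P) (x : P) :
    Finset (Fin n) :=
  Finset.univ.filter (fun i => ∃ y ∈ f i, y ≤ x)

lemma mem_phi {P : Type} [PartialOrder P] {n : ℕ} (f : Fin n → Finset P) (x : P) (i : Fin n) :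
    i ∈ phi f x ↔ ∃ y ∈ f i, y ≤ x := by
  simp [phi]

lemma phi_mono {P : Type} [PartialOrder P] {n : ℕ} (f : Fin n → Finset P) {x y : P}
    (h : x ≤ y) : phi f x ⊆ phi f y := by
  intro i hi
  rw [mem_phi] at hi ⊢
  obtain ⟨z, hz, hzx⟩ := hi
  exact ⟨z, hz, hzx.trans h⟩

lemma coe_shF {P : Type} [Fintype P] [PartialOrder P] (Q A : Finset P) :
    (shF Q A : Set P) = upperShadow (Q : Set P) (A : Set P) := by
  ext y; simp [shF]

lemma shF_mem {P : Type} [Fintype P] [PartialOrder P] (Q A : Finset P) :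
    shF Q A ∈ antichainsIn (Q : Set P) := by
  unfold antichainsIn antichains
  simp only [Finset.mem_filter, Finset.mem_univ, true_and, coe_shF]
  refine ⟨?_, fun y hy => hy.1⟩
  intro x hx y hy hne hle
  obtain ⟨z, hz, hzx⟩ := hx.2.1
  exact hy.2.2 x hx.1 (lt_of_le_of_ne hle hne) z hz hzx

/-- the shadow is determined by the restriction of `phi` to `Q`. -/
lemma shF_eq {P : Type} [Fintype P] [PartialOrder P] {n : ℕ} (Q : Finset P)
    (f g : Fin n → Finset P) (h : ∀ x ∈ Q, phi f x = phi g x) (i : Fin n) :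
    shF Q (f i) = shF Q (g i) := by
  have key : ∀ x ∈ Q, (∃ y ∈ f i, y ≤ x) ↔ (∃ y ∈ g i, y ≤ x) := by
    intro x hx
    rw [← mem_phi, ← mem_phi, h x hx]
  ext y
  rw [← Finset.mem_coe, ← Finset.mem_coe, coe_shF, coe_shF]
  show (y ∈ Q ∧ (∃ x ∈ f i, x ≤ y) ∧ ∀ z ∈ Q, z < y → ∀ x ∈ f i, ¬ x ≤ z) ↔
    (y ∈ Q ∧ (∃ x ∈ g i, x ≤ y) ∧ ∀ z ∈ Q, z < y → ∀ x ∈ g i, ¬ x ≤ z)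
  refine and_congr_right fun hy => and_congr (key y hy) ?_
  refine forall_congr' fun z => forall_congr' fun hz => forall_congr' fun _ => ?_
  have := not_congr (key z hz)
  push Not at this
  exact this

open Classical in
lemma bw_eq {P : Type} [Fintype P] [PartialOrder P] {α : Finset P → ℝ} (hα : IsWeighting α)
    (Q A : Finset P) : bw α Q A = ∑ B, if shF Q B = shF Q A then α B else 0 := by
  unfold bw shadowWeight
  rw [Finset.sum_filter, ← Finset.sum_subset (Finset.subset_univ (antichains P))]
  · refine Finset.sum_congr rfl fun B _ => ?_
    simp only [← coe_shF, Finset.coe_inj]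
  · intro B _ hB
    simp [hα.2.1 B hB]

lemma alpha_nonneg {P : Type} [Fintype P] [PartialOrder P] {α : Finset P → ℝ}
    (hα : IsWeighting α) (A : Finset P) : 0 ≤ α A := by
  by_cases h : A ∈ antichains P
  · exact hα.1 A h
  · rw [hα.2.1 A h]

lemma alpha_sum {P : Type} [Fintype P] [PartialOrder P] {α : Finset P → ℝ}
    (hα : IsWeighting α) : ∑ A, α A = 1 := by
  rw [← hα.2.2, ← Finset.sum_subset (Finset.subset_univ (antichains P))]
  exact fun B _ hB => hα.2.1 B hB

lemma alpha_le_bw {P : Type} [Fintype P] [PartialOrder P] {α : Finset P → ℝ}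
    (hα : IsWeighting α) (Q A : Finset P) : α A ≤ bw α Q A := by
  classical
  rw [bw_eq hα]
  have := Finset.single_le_sum (f := fun B => if shF Q B = shF Q A then α B else 0)
    (s := Finset.univ) (fun B _ => by
      show 0 ≤ _
      split_ifs
      · exact alpha_nonneg hα B
      · exact le_rfl) (Finset.mem_univ A)
  simpa using this

open Classical in
lemma agree_bound {P : Type} [Fintype P] [PartialOrder P] {α : Finset P → ℝ}
    (hα : IsWeighting α) {n : ℕ} (Q : Finset P) (g0 : Fin n → Finset P) :
    (∑ g : Fin n → Finset P, (∏ i, α (g i)) * (if ∀ x ∈ Q, phi g x = phi g0 x then 1 else 0))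
      ≤ ∏ i, bw α Q (g0 i) := by
  have e : ∏ i, bw α Q (g0 i) = ∑ g : Fin n → Finset P,
      ∏ i, (if shF Q (g i) = shF Q (g0 i) then α (g i) else 0) := by
    simp_rw [bw_eq hα]
    rw [Finset.prod_univ_sum, Fintype.piFinset_univ]
  rw [e]
  refine Finset.sum_le_sum fun g _ => ?_
  split_ifs with h
  · rw [mul_one]
    apply le_of_eq
    refine Finset.prod_congr rfl fun i _ => ?_
    rw [if_pos (shF_eq Q g g0 h i)]
  · rw [mul_zero]
    refine Finset.prod_nonneg fun i _ => ?_
    split_ifs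
    · exact alpha_nonneg hα _
    · exact le_rfl

lemma entropy_eq {P : Type} [Fintype P] [PartialOrder P] {α : Finset P → ℝ}
    (hα : IsWeighting α) (Q : Finset P) (hQ : Q.Nonempty) :
    ∑ A, α A * Real.log (bw α Q A) = - (critExp α (Q : Set P) * Q.card) := by
  classical
  have hc : (Q.card : ℝ) ≠ 0 := by
    have := hQ.card_pos
    positivity
  unfold critExp
  rw [Set.ncard_coe_finset, div_mul_cancel₀ _ hc, Finset.sum_neg_distrib, neg_neg]
  have h1 : ∑ A, α A * Real.log (bw α Q A) =
      ∑ A ∈ antichains P, α A * Real.log (bw α Q A) := by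
    rw [← Finset.sum_subset (Finset.subset_univ (antichains P))]
    intro B _ hB
    simp [hα.2.1 B hB]
  rw [h1, ← Finset.sum_fiberwise_of_maps_to (g := fun A => shF Q A)
    (t := antichainsIn (Q : Set P)) (fun A _ => shF_mem Q A)]
  refine Finset.sum_congr rfl fun T _ => ?_
  conv_rhs => rw [show shadowWeight α (Q : Set P) T = ∑ A ∈ (antichains P).filter
    (fun B : Finset P => shF Q B = T), α A from by
      unfold shadowWeight
      simp only [← coe_shF, Finset.coe_inj]]
  rw [Finset.sum_mul]
  refine Finset.sum_congr rfl fun A hA => ?_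
  rw [Finset.mem_filter] at hA
  congr 2
  unfold bw
  rw [hA.2]
  unfold shadowWeight
  simp only [← coe_shF, Finset.coe_inj]

lemma exists_s {ι : Type} [Fintype ι] (a u : ι → ℝ) (ha : ∑ i, a i = 1)
    (hd : ∑ i, a i * u i < 0) : ∃ s : ℝ, 0 < s ∧ ∑ i, a i * Real.exp (s * u i) < 1 := by
  have hder : HasDerivAt (fun s : ℝ => ∑ i, a i * Real.exp (s * u i)) (∑ i, a i * u i) 0 := by
    have : ∀ i ∈ (Finset.univ : Finset ι),
        HasDerivAt (fun s : ℝ => a i * Real.exp (s * u i)) (a i * u i) 0 := by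
      intro i _
      have h := (((hasDerivAt_id (0:ℝ)).mul_const (u i)).exp).const_mul (a i)
      simpa using h
    have h := HasDerivAt.fun_sum this
    simpa using h
  rw [hasDerivAt_iff_tendsto_slope] at hder
  have h2 := (hder.mono_left (nhdsGT_le_nhdsNE 0)).eventually (gt_mem_nhds hd)
  obtain ⟨s, hs, hs0⟩ := (h2.and self_mem_nhdsWithin).exists
  refine ⟨s, hs0, ?_⟩
  have hs0' : (0:ℝ) < s := hs0
  rw [slope_def_field] at hs
  simp only [zero_mul, Real.exp_zero, mul_one, ha, sub_zero] at hs
  rw [div_lt_iff₀ hs0'] at hs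
  linarith

open Classical in
lemma chernoff {P : Type} [Fintype P] [PartialOrder P] {α : Finset P → ℝ}
    (hα : IsWeighting α) (Q : Finset P) (hQ : Q.Nonempty) (h : ℝ)
    (hh : h < critExp α (Q : Set P)) :
    ∃ ρ : ℝ, 0 ≤ ρ ∧ ρ < 1 ∧ ∀ n : ℕ, (∑ f : Fin n → Finset P, (∏ i, α (f i)) *
      (if Real.exp (-(h * Q.card * n)) < ∏ i, bw α Q (f i) then 1 else 0)) ≤ ρ ^ n := by
  have hc : (0:ℝ) < Q.card := by exact_mod_cast hQ.card_pos
  obtain ⟨s, hs0, hs⟩ := exists_s α (fun A => Real.log (bw α Q A) + h * Q.card)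
    (alpha_sum hα) (by
      simp_rw [mul_add]
      rw [Finset.sum_add_distrib, entropy_eq hα Q hQ, ← Finset.sum_mul, alpha_sum hα]
      nlinarith)
  refine ⟨_, ?_, hs, ?_⟩
  · exact Finset.sum_nonneg fun A _ => mul_nonneg (alpha_nonneg hα A) (Real.exp_pos _).le
  intro n
  rw [Fintype.sum_pow]
  refine Finset.sum_le_sum fun f _ => ?_
  rw [Finset.prod_mul_distrib]
  by_cases hz : ∃ i, α (f i) = 0
  · obtain ⟨i, hi⟩ := hz
    rw [Finset.prod_eq_zero (Finset.mem_univ i) hi]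
    simp
  push Not at hz
  refine mul_le_mul_of_nonneg_left ?_ (Finset.prod_nonneg fun i _ => alpha_nonneg hα _)
  rw [← Real.exp_sum]
  split_ifs with hb
  · rw [Real.one_le_exp_iff, ← Finset.mul_sum]
    refine mul_nonneg hs0.le ?_
    rw [Finset.sum_add_distrib]
    have hpos : ∀ i, 0 < bw α Q (f i) := fun i =>
      lt_of_lt_of_le (lt_of_le_of_ne (alpha_nonneg hα _) (hz i).symm) (alpha_le_bw hα Q _)
    have := Real.log_lt_log (Real.exp_pos _) hb
    rw [Real.log_exp, Real.log_prod (fun i _ => (hpos i).ne')] at this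
    simp only [Finset.sum_const, Finset.card_univ, Fintype.card_fin, nsmul_eq_mul]
    linarith
  · exact (Real.exp_pos _).le

/-- typical and inducing -/
def Good {P : Type} [Fintype P] [PartialOrder P] (α : Finset P → ℝ) (h : ℝ) {n : ℕ}
    (f : Fin n → Finset P) : Prop :=
  (∀ Q : Finset P, Q.Nonempty → ∏ i, bw α Q (f i) ≤ Real.exp (-(h * Q.card * n))) ∧
    ∀ x y : P, phi f x ⊆ phi f y ↔ x ≤ y

open Classical in
noncomputable def gw {P : Type} [Fintype P] [PartialOrder P] (α : Finset P → ℝ) (h : ℝ) {n : ℕ}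
    (f : Fin n → Finset P) : ℝ :=
  if Good α h f then ∏ i, α (f i) else 0

lemma gw_nonneg {P : Type} [Fintype P] [PartialOrder P] {α : Finset P → ℝ}
    (hα : IsWeighting α) (h : ℝ) {n : ℕ} (f : Fin n → Finset P) : 0 ≤ gw α h f := by
  unfold gw
  split_ifs
  · exact Finset.prod_nonneg fun i _ => alpha_nonneg hα _
  · exact le_rfl

lemma gw_le {P : Type} [Fintype P] [PartialOrder P] {α : Finset P → ℝ}
    (hα : IsWeighting α) (h : ℝ) {n : ℕ} (f : Fin n → Finset P) :
    gw α h f ≤ ∏ i, α (f i) := by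
  unfold gw
  split_ifs
  · exact le_rfl
  · exact Finset.prod_nonneg fun i _ => alpha_nonneg hα _

lemma singleton_mem {P : Type} [Fintype P] [PartialOrder P] (x : P) : {x} ∈ antichains P := by
  classical
  simp [antichains]

lemma W_tendsto {P : Type} [Fintype P] [PartialOrder P] {α : Finset P → ℝ}
    (hα : IsWeighting α) (hpos : ∀ x : P, 0 < α {x}) (h : ℝ)
    (hh : ∀ Q : Finset P, Q.Nonempty → h < critExp α (Q : Set P)) :
    Filter.Tendsto (fun n : ℕ => ∑ f : Fin n → Finset P, gw α h f) Filter.atTop (nhds 1) := by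
  classical
  have H : ∀ Q : Finset P, ∃ ρ : ℝ, 0 ≤ ρ ∧ ρ < 1 ∧ (Q.Nonempty → ∀ n : ℕ,
      (∑ f : Fin n → Finset P, (∏ i, α (f i)) *
      (if Real.exp (-(h * Q.card * n)) < ∏ i, bw α Q (f i) then 1 else 0)) ≤ ρ ^ n) := by
    intro Q
    by_cases hQ : Q.Nonempty
    · obtain ⟨ρ, h0, h1, h2⟩ := chernoff hα Q hQ h (hh Q hQ)
      exact ⟨ρ, h0, h1, fun _ => h2⟩
    · exact ⟨0, le_rfl, one_pos, fun h => absurd h hQ⟩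
  choose ρ hρ0 hρ1 hρ using H
  have hle1 : ∀ x : P, α {x} ≤ 1 := by
    intro x
    rw [← alpha_sum hα]
    exact Finset.single_le_sum (fun A _ => alpha_nonneg hα A) (Finset.mem_univ _)
  have hx : ∀ x : P, ∀ n : ℕ, (∑ f : Fin n → Finset P, (∏ i, α (f i)) *
      (if ∀ i, f i ≠ {x} then 1 else 0)) ≤ (1 - α {x}) ^ n := by
    intro x n
    have e : 1 - α {x} = ∑ A, α A * (if A ≠ {x} then 1 else 0) := by
      have : ∀ A, α A * (if A ≠ {x} then 1 else 0) = α A - (if A = {x} then α A else 0) := by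
        intro A
        by_cases hA : A = {x} <;> simp [hA]
      simp_rw [this]
      rw [Finset.sum_sub_distrib, alpha_sum hα, Finset.sum_ite_eq' ]
      simp
    rw [e, Fintype.sum_pow]
    refine Finset.sum_le_sum fun f _ => ?_
    rw [Finset.prod_mul_distrib]
    refine mul_le_mul_of_nonneg_left ?_ (Finset.prod_nonneg fun i _ => alpha_nonneg hα _)
    split_ifs with h
    · rw [Finset.prod_eq_one]
      intro i _
      rw [if_pos (h i)]
    · exact Finset.prod_nonneg fun i _ => by split_ifs <;> norm_num
  have key : ∀ n : ℕ, 1 - (∑ Q, ρ Q ^ n + ∑ x, (1 - α {x}) ^ n) ≤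
      ∑ f : Fin n → Finset P, gw α h f := by
    intro n
    have h1 : (1:ℝ) = ∑ f : Fin n → Finset P, ∏ i, α (f i) := by
      rw [← Fintype.sum_pow, alpha_sum hα, one_pow]
    have h2 : ∑ f : Fin n → Finset P, ∏ i, α (f i) ≤ ∑ f : Fin n → Finset P, (gw α h f +
        ((∑ Q ∈ Finset.univ.filter (fun Q : Finset P => Q.Nonempty), (∏ i, α (f i)) *
      (if Real.exp (-(h * Q.card * n)) < ∏ i, bw α Q (f i) then 1 else 0)) +
        ∑ x : P, (∏ i, α (f i)) * (if ∀ i, f i ≠ {x} then 1 else 0))) := by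
      refine Finset.sum_le_sum fun f _ => ?_
      have hm : 0 ≤ ∏ i, α (f i) := Finset.prod_nonneg fun i _ => alpha_nonneg hα _
      have n1 : ∀ Q ∈ Finset.univ.filter (fun Q : Finset P => Q.Nonempty), 0 ≤ (∏ i, α (f i)) *
          (if Real.exp (-(h * Q.card * n)) < ∏ i, bw α Q (f i) then (1:ℝ) else 0) :=
        fun Q _ => mul_nonneg hm (by split_ifs <;> norm_num)
      have n2 : ∀ x ∈ (Finset.univ : Finset P), 0 ≤ (∏ i, α (f i)) *
          (if ∀ i, f i ≠ {x} then (1:ℝ) else 0) :=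
        fun Q _ => mul_nonneg hm (by split_ifs <;> norm_num)
      have s1 := Finset.sum_nonneg n1
      have s2 := Finset.sum_nonneg n2
      by_cases hg : Good α h f
      · have : gw α h f = ∏ i, α (f i) := if_pos hg
        linarith
      · have g0 : gw α h f = 0 := if_neg hg
        rw [g0]
        unfold Good at hg
        rw [not_and_or] at hg
        rcases hg with hg | hg
        · push Not at hg
          obtain ⟨Q, hQ, hlt⟩ := hg
          have := Finset.single_le_sum n1 (Finset.mem_filter.2 ⟨Finset.mem_univ Q, hQ⟩)
          rw [if_pos hlt] at this
          linarith
        · have : ∃ x : P, ∀ i, f i ≠ {x} := by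
            by_contra hcon
            push Not at hcon
            apply hg
            intro x y
            refine ⟨fun hs => ?_, fun hxy => phi_mono f hxy⟩
            obtain ⟨i, hi⟩ := hcon x
            have := hs ((mem_phi f x i).2 ⟨x, by simp [hi], le_rfl⟩)
            rw [mem_phi, hi] at this
            simpa using this
          obtain ⟨x, hx⟩ := this
          have := Finset.single_le_sum n2 (Finset.mem_univ x)
          rw [if_pos hx] at this
          linarith
    rw [← h1, Finset.sum_add_distrib, Finset.sum_add_distrib, Finset.sum_comm,
      Finset.sum_comm (γ := Fin n → Finset P) (α := P)] at h2
    have b1 : ∑ Q ∈ Finset.univ.filter (fun Q : Finset P => Q.Nonempty),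
        ∑ f : Fin n → Finset P, (∏ i, α (f i)) *
        (if Real.exp (-(h * Q.card * n)) < ∏ i, bw α Q (f i) then (1:ℝ) else 0) ≤
        ∑ Q, ρ Q ^ n := by
      refine (Finset.sum_le_sum fun Q hQ => hρ Q (Finset.mem_filter.1 hQ).2 n).trans ?_
      exact Finset.sum_le_sum_of_subset_of_nonneg (Finset.subset_univ _)
        (fun Q _ _ => pow_nonneg (hρ0 Q) n)
    have b2 := Finset.sum_le_sum fun x (_ : x ∈ (Finset.univ : Finset P)) => hx x n
    linarith
  have up : ∀ n : ℕ, ∑ f : Fin n → Finset P, gw α h f ≤ 1 := by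
    intro n
    refine (Finset.sum_le_sum fun f _ => gw_le hα h f).trans ?_
    rw [← Fintype.sum_pow, alpha_sum hα, one_pow]
  have lim : Filter.Tendsto (fun n : ℕ => 1 - (∑ Q, ρ Q ^ n + ∑ x : P, (1 - α {x}) ^ n))
      Filter.atTop (nhds (1 - (∑ Q : Finset P, (0:ℝ) + ∑ x : P, (0:ℝ)))) := by
    refine Filter.Tendsto.const_sub _ (Filter.Tendsto.add ?_ ?_)
    · exact tendsto_finsetSum _ fun Q _ => tendsto_pow_atTop_nhds_zero_of_lt_one (hρ0 Q) (hρ1 Q)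
    · exact tendsto_finsetSum _ fun x _ => tendsto_pow_atTop_nhds_zero_of_lt_one
        (by linarith [hle1 x]) (by linarith [hpos x])
  simp only [Finset.sum_const_zero, add_zero, sub_zero] at lim
  exact tendsto_of_tendsto_of_tendsto_of_le_of_le lim tendsto_const_nhds key up

noncomputable def wt (n : ℕ) (p : ℝ) (ω : Finset (Fin n) → Bool) : ℝ :=
  ∏ X : Finset (Fin n), (if ω X = true then p else 1 - p)

open Classical in
lemma sum_wt_sub (n : ℕ) (p : ℝ) (S : Finset (Finset (Fin n))) :
    ∑ ω, wt n p ω * (if ∀ X ∈ S, ω X = true then 1 else 0) = p ^ S.card := by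
  have e : ∀ ω, wt n p ω * (if ∀ X ∈ S, ω X = true then 1 else 0) =
      ∏ X, ((if ω X = true then p else 1 - p) * (if X ∈ S → ω X = true then 1 else 0)) := by
    intro ω
    rw [Finset.prod_mul_distrib]
    congr 1
    split_ifs with h
    · symm
      apply Finset.prod_eq_one
      intro X _
      rw [if_pos (h X)]
    · push Not at h
      obtain ⟨X, hX, hω⟩ := h
      symm
      apply Finset.prod_eq_zero (Finset.mem_univ X)
      rw [if_neg]
      exact fun h => hω (h hX)
  simp_rw [e]
  have := (Finset.prod_univ_sum (fun _ : Finset (Fin n) => (Finset.univ : Finset Bool))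
    (fun X b => (if b = true then p else 1 - p) * (if X ∈ S → b = true then (1:ℝ) else 0)))
  rw [Fintype.piFinset_univ] at this
  rw [← this]
  have e2 : ∀ X : Finset (Fin n), ∑ b : Bool, (if b = true then p else 1 - p) *
      (if X ∈ S → b = true then (1:ℝ) else 0) = if X ∈ S then p else 1 := by
    intro X
    by_cases h : X ∈ S <;> simp [h]
  simp_rw [e2]
  rw [Finset.prod_ite_mem, Finset.univ_inter, Finset.prod_const]

lemma wt_nonneg (n : ℕ) (p : ℝ) (h0 : 0 ≤ p) (h1 : p ≤ 1) (ω) : 0 ≤ wt n p ω :=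
  Finset.prod_nonneg fun X _ => by split_ifs <;> linarith

lemma cubeProb_le_one (n : ℕ) (p : ℝ) (h0 : 0 ≤ p) (h1 : p ≤ 1) (E) : cubeProb n p E ≤ 1 := by
  classical
  have := sum_wt_sub n p ∅
  simp at this
  rw [← this]
  exact Finset.sum_le_sum_of_subset_of_nonneg (Finset.subset_univ _)
    (fun ω _ _ => wt_nonneg n p h0 h1 ω)

/-- Second moment method. -/
lemma second_moment {ι : Type} [Fintype ι] (n : ℕ) (p : ℝ) (h0 : 0 ≤ p) (h1 : p ≤ 1)
    (w : ι → ℝ) (S : ι → Finset (Finset (Fin n)))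
    (E : Set (Finset (Fin n) → Bool))
    (hE : ∀ f, w f ≠ 0 → ∀ ω, (∀ X ∈ S f, ω X = true) → ω ∈ E) :
    (∑ f, w f * p ^ (S f).card) ^ 2 ≤
      (∑ f, ∑ g, w f * w g * p ^ (S f ∪ S g).card) * cubeProb n p E := by
  classical
  set X : (Finset (Fin n) → Bool) → ℝ := fun ω =>
    ∑ f, w f * (if ∀ X ∈ S f, ω X = true then 1 else 0) with hX
  have e1 : ∑ f, w f * p ^ (S f).card = ∑ ω, wt n p ω * X ω := by
    simp_rw [← sum_wt_sub, hX, Finset.mul_sum]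
    rw [Finset.sum_comm]
    refine Finset.sum_congr rfl fun ω _ => Finset.sum_congr rfl fun f _ => by ring
  have e2 : ∑ f, ∑ g, w f * w g * p ^ (S f ∪ S g).card = ∑ ω, wt n p ω * X ω ^ 2 := by
    simp_rw [← sum_wt_sub, hX, sq, Finset.sum_mul_sum, Finset.mul_sum]
    rw [Finset.sum_comm' (t' := Finset.univ) (s' := fun _ => Finset.univ) (by simp)]
    simp_rw [Finset.sum_comm (s := (Finset.univ : Finset ι))
      (t := (Finset.univ : Finset (Finset (Fin n) → Bool)))]
    refine Finset.sum_congr rfl fun ω _ => ?_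
    rw [Finset.sum_comm]
    refine Finset.sum_congr rfl fun f _ => Finset.sum_congr rfl fun g _ => ?_
    by_cases hf : ∀ X ∈ S f, ω X = true
    · by_cases hg : ∀ X ∈ S g, ω X = true
      · rw [if_pos hf, if_pos hg, if_pos]
        · ring
        · intro X hX
          rcases Finset.mem_union.1 hX with h | h
          exacts [hf X h, hg X h]
      · rw [if_neg hg, if_neg]
        · ring
        · exact fun h => hg fun X hX => h X (Finset.mem_union_right _ hX)
    · rw [if_neg hf, if_neg]
      · ring
      · exact fun h => hf fun X hX => h X (Finset.mem_union_left _ hX)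
  have hX0 : ∀ ω, ω ∉ E → X ω = 0 := by
    intro ω hω
    apply Finset.sum_eq_zero
    intro f _
    by_cases hw : w f = 0
    · simp [hw]
    · rw [if_neg, mul_zero]
      exact fun h => hω (hE f hw ω h)
  have e3 : cubeProb n p E = ∑ ω, wt n p ω * (if ω ∈ E then 1 else 0) := by
    unfold cubeProb
    rw [Finset.sum_filter]
    refine Finset.sum_congr rfl fun ω _ => ?_
    simp [wt]
  rw [e1, e2, e3]
  refine Finset.sum_sq_le_sum_mul_sum_of_sq_le_mul _ (fun ω _ => ?_) (fun ω _ => ?_)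
    (fun ω _ => ?_)
  · exact mul_nonneg (wt_nonneg n p h0 h1 ω) (sq_nonneg _)
  · exact mul_nonneg (wt_nonneg n p h0 h1 ω) (by split_ifs <;> norm_num)
  · by_cases h : ω ∈ E
    · rw [if_pos h]; apply le_of_eq; ring
    · rw [if_neg h, hX0 ω h]; apply le_of_eq; ring

open Classical in
noncomputable def img {P : Type} [Fintype P] [PartialOrder P] {n : ℕ} (f : Fin n → Finset P) :
    Finset (Finset (Fin n)) :=
  Finset.univ.image (phi f)

lemma Good.inj {P : Type} [Fintype P] [PartialOrder P] {α : Finset P → ℝ} {h : ℝ} {n : ℕ}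
    {f : Fin n → Finset P} (hf : Good α h f) : Function.Injective (phi f) := by
  intro x y hxy
  exact le_antisymm ((hf.2 x y).1 hxy.le) ((hf.2 y x).1 hxy.ge)

lemma Good.card_img {P : Type} [Fintype P] [PartialOrder P] {α : Finset P → ℝ} {h : ℝ} {n : ℕ}
    {f : Fin n → Finset P} (hf : Good α h f) : (img f).card = Fintype.card P := by
  classical
  unfold img
  rw [Finset.card_image_of_injective _ hf.inj, Finset.card_univ]

open Classical in
lemma pair_bound {P : Type} [Fintype P] [PartialOrder P] {α : Finset P → ℝ} {h : ℝ} {n : ℕ}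
    {f g : Fin n → Finset P} (hf : Good α h f) (hg : Good α h g) (p : ℝ) (hp : 0 < p) :
    p ^ (img f ∪ img g).card ≤ (p ^ Fintype.card P) ^ 2 * (1 +
      ∑ Q ∈ Finset.univ.filter (fun Q : Finset P => Q.Nonempty), ∑ ψ : P → P,
        (if ∀ y ∈ Q, phi g y = phi f (ψ y) then 1 else 0) * (p ^ Q.card)⁻¹) := by
  set Q : Finset P := Finset.univ.filter (fun y => phi g y ∈ img f) with hQ
  have hcard : (img f ∩ img g).card = Q.card := by
    rw [← Finset.card_image_of_injective Q hg.inj]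
    congr 1
    ext X
    simp only [Finset.mem_inter, Finset.mem_image, hQ, Finset.mem_filter, Finset.mem_univ,
      true_and]
    constructor
    · rintro ⟨h1, h2⟩
      obtain ⟨y, _, rfl⟩ := Finset.mem_image.1 h2
      exact ⟨y, h1, rfl⟩
    · rintro ⟨y, h1, rfl⟩
      exact ⟨h1, Finset.mem_image_of_mem _ (Finset.mem_univ y)⟩
  have hu := Finset.card_union_add_card_inter (img f) (img g)
  rw [hcard, hf.card_img, hg.card_img] at hu
  have hpe : p ^ (img f ∪ img g).card = (p ^ Fintype.card P) ^ 2 * (p ^ Q.card)⁻¹ := by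
    have : p ^ Q.card ≠ 0 := by positivity
    rw [eq_mul_inv_iff_mul_eq₀ this, ← pow_add, hu, ← pow_mul]
    ring
  rw [hpe]
  refine mul_le_mul_of_nonneg_left ?_ (by positivity)
  have nn : ∀ (Q : Finset P) (ψ : P → P), 0 ≤
      (if ∀ y ∈ Q, phi g y = phi f (ψ y) then (1:ℝ) else 0) * (p ^ Q.card)⁻¹ :=
    fun Q ψ => mul_nonneg (by split_ifs <;> norm_num) (by positivity)
  by_cases hne : Q.Nonempty
  · have hex : ∀ y : P, ∃ x : P, y ∈ Q → phi g y = phi f x := by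
      intro y
      by_cases hy : y ∈ Q
      · obtain ⟨x, _, hx⟩ := Finset.mem_image.1 (Finset.mem_filter.1 hy).2
        exact ⟨x, fun _ => hx.symm⟩
      · exact ⟨y, fun h => absurd h hy⟩
    choose ψ hψ using hex
    have s1 := Finset.single_le_sum (f := fun ψ : P → P =>
      (if ∀ y ∈ Q, phi g y = phi f (ψ y) then (1:ℝ) else 0) * (p ^ Q.card)⁻¹)
      (fun ψ _ => nn Q ψ) (Finset.mem_univ ψ)
    have s2 := Finset.single_le_sum (f := fun Q : Finset P => ∑ ψ : P → P,
      (if ∀ y ∈ Q, phi g y = phi f (ψ y) then (1:ℝ) else 0) * (p ^ Q.card)⁻¹)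
      (fun Q _ => Finset.sum_nonneg fun ψ _ => nn Q ψ)
      (Finset.mem_filter.2 ⟨Finset.mem_univ Q, hne⟩)
    rw [if_pos hψ, one_mul] at s1
    exact (s1.trans s2).trans (le_add_of_nonneg_left zero_le_one)
  · rw [Finset.not_nonempty_iff_eq_empty] at hne
    rw [hne]
    simp only [Finset.card_empty, pow_zero, inv_one, le_add_iff_nonneg_right]
    exact Finset.sum_nonneg fun Q _ => Finset.sum_nonneg fun ψ _ => nn Q ψ

open Classical in
lemma inner_bound {P : Type} [Fintype P] [PartialOrder P] {α : Finset P → ℝ}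
    (hα : IsWeighting α) (h : ℝ) {n : ℕ} (Q : Finset P) (hQ : Q.Nonempty)
    (r : P → Finset (Fin n)) :
    ∑ g : Fin n → Finset P, gw α h g * (if ∀ y ∈ Q, phi g y = r y then 1 else 0) ≤
      Real.exp (-(h * Q.card * n)) := by
  by_cases hex : ∃ g0 : Fin n → Finset P, Good α h g0 ∧ ∀ y ∈ Q, phi g0 y = r y
  · obtain ⟨g0, hg0, hr⟩ := hex
    refine le_trans ?_ ((agree_bound hα Q g0).trans (hg0.1 Q hQ))
    refine Finset.sum_le_sum fun g _ => ?_
    have : (∀ y ∈ Q, phi g y = r y) ↔ ∀ y ∈ Q, phi g y = phi g0 y :=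
      forall_congr' fun y => forall_congr' fun hy => by rw [hr y hy]
    rw [if_congr this rfl rfl]
    exact mul_le_mul_of_nonneg_right (gw_le hα h g) (by split_ifs <;> norm_num)
  · refine le_trans (le_of_eq ?_) (Real.exp_pos _).le
    apply Finset.sum_eq_zero
    intro g _
    by_cases hg : Good α h g
    · rw [if_neg, mul_zero]
      exact fun hr => hex ⟨g, hg, hr⟩
    · unfold gw
      rw [if_neg hg, zero_mul]

lemma moment_bound {P : Type} [Fintype P] [PartialOrder P] {α : Finset P → ℝ}
    (hα : IsWeighting α) (h c : ℝ) (hch : c < h) (n : ℕ) :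
    (∑ f : Fin n → Finset P, ∑ g : Fin n → Finset P, gw α h f * gw α h g *
      Real.exp (-(c * n)) ^ (@Union.union _ (@Finset.instUnion _ (Classical.decEq _)) (img f) (img g)).card) ≤
      (Real.exp (-(c * n)) ^ Fintype.card P) ^ 2 *
        ((∑ f : Fin n → Finset P, gw α h f) ^ 2 + (∑ f : Fin n → Finset P, gw α h f) *
        ((Fintype.card (Finset P) * Fintype.card P ^ Fintype.card P : ℕ) *
          Real.exp (-((h - c) * n)))) := by
  classical
  set p := Real.exp (-(c * n)) with hp
  have hp0 : 0 < p := Real.exp_pos _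
  have step1 : ∀ f g : Fin n → Finset P, gw α h f * gw α h g *
      p ^ (@Union.union _ (@Finset.instUnion _ (Classical.decEq _)) (img f) (img g)).card ≤
      (p ^ Fintype.card P) ^ 2 * (gw α h f * gw α h g + gw α h f *
        ∑ Q ∈ Finset.univ.filter (fun Q : Finset P => Q.Nonempty), ∑ ψ : P → P,
        (p ^ Q.card)⁻¹ * (gw α h g * (if ∀ y ∈ Q, phi g y = phi f (ψ y) then 1 else 0))) := by
    intro f g
    by_cases hf : Good α h f
    · by_cases hg : Good α h g
      · have := mul_le_mul_of_nonneg_left (pair_bound hf hg p hp0)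
          (mul_nonneg (gw_nonneg hα h f) (gw_nonneg hα h g))
        refine (le_of_eq ?_).trans (this.trans (le_of_eq ?_))
        · congr!
        rw [mul_left_comm]
        congr 1
        rw [mul_add, mul_one, mul_assoc]
        congr 2
        rw [Finset.mul_sum]
        refine Finset.sum_congr rfl fun Q _ => ?_
        rw [Finset.mul_sum]
        refine Finset.sum_congr rfl fun ψ _ => ?_
        ring
      · have : gw α h g = 0 := if_neg hg
        simp [this]
    · have : gw α h f = 0 := if_neg hf
      simp [this]
  refine (Finset.sum_le_sum fun f _ => Finset.sum_le_sum fun g _ => step1 f g).trans ?_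
  simp_rw [← Finset.mul_sum]
  refine mul_le_mul_of_nonneg_left ?_ (by positivity)
  simp_rw [Finset.sum_add_distrib, ← Finset.mul_sum]
  rw [sq, ← Finset.sum_mul]
  refine add_le_add le_rfl ?_
  rw [Finset.sum_mul]
  refine Finset.sum_le_sum fun f _ => mul_le_mul_of_nonneg_left ?_ (gw_nonneg hα h f)
  rw [Finset.sum_comm]
  have b : ∀ Q ∈ Finset.univ.filter (fun Q : Finset P => Q.Nonempty),
      ∑ g : Fin n → Finset P, ∑ ψ : P → P,
        (p ^ Q.card)⁻¹ * (gw α h g * (if ∀ y ∈ Q, phi g y = phi f (ψ y) then 1 else 0)) ≤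
      ∑ ψ : P → P, Real.exp (-((h - c) * n)) := by
    intro Q hQ
    have hQ' := (Finset.mem_filter.1 hQ).2
    rw [Finset.sum_comm]
    refine Finset.sum_le_sum fun ψ _ => ?_
    rw [← Finset.mul_sum]
    refine (mul_le_mul_of_nonneg_left (inner_bound hα h Q hQ' (fun y => phi f (ψ y)))
      (by positivity)).trans ?_
    rw [hp, ← Real.exp_nat_mul, ← Real.exp_neg, ← Real.exp_add, Real.exp_le_exp]
    have hc1 : (1:ℝ) ≤ Q.card := by exact_mod_cast hQ'.card_pos
    have hn : (0:ℝ) ≤ n := Nat.cast_nonneg n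
    have : 0 ≤ (h - c) * n * (Q.card - 1) :=
      mul_nonneg (mul_nonneg (by linarith) hn) (by linarith)
    nlinarith
  simp_rw [← Finset.mul_sum] at b ⊢
  refine (Finset.sum_le_sum b).trans ?_
  rw [Finset.sum_const, Finset.sum_const, Finset.card_univ, nsmul_eq_mul, nsmul_eq_mul,
    Fintype.card_fun, ← mul_assoc]
  refine mul_le_mul_of_nonneg_right ?_ (Real.exp_pos _).le
  rw [Nat.cast_mul]
  refine mul_le_mul_of_nonneg_right ?_ (by positivity)
  exact_mod_cast (Finset.card_le_univ _)

lemma exists_weighting {P : Type} [Fintype P] [PartialOrder P]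
    (c : ℝ) (hc0 : 0 < c) (hc : c < critStar P) :
    ∃ (α : Finset P → ℝ) (h : ℝ), IsWeighting α ∧ (∀ x : P, 0 < α {x}) ∧ c < h ∧
      ∀ Q : Finset P, Q.Nonempty → h < critExp α (Q : Set P) := by
  classical
  have hne : {c : ℝ | 0 ≤ c ∧ ∃ α : Finset P → ℝ, IsWeighting α ∧
    ∀ Q : Set P, Q.Nonempty → c ≤ critExp α Q}.Nonempty := by
    by_contra hcon
    rw [Set.not_nonempty_iff_eq_empty] at hcon
    unfold critStar at hc
    rw [hcon, Real.sSup_empty] at hc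
    linarith
  obtain ⟨c1, ⟨_, α, hα, hαQ⟩, hc1⟩ := exists_lt_of_lt_csSup hne hc
  have hN : 0 < (antichains P).card := Finset.card_pos.2 ⟨∅, by simp [antichains]⟩
  have hN' : (0:ℝ) < (antichains P).card := by exact_mod_cast hN
  set u : Finset P → ℝ := fun A => if A ∈ antichains P then ((antichains P).card : ℝ)⁻¹ else 0
    with hu
  set β : ℝ → Finset P → ℝ := fun t A => (1 - t) * α A + t * u A with hβ
  have hcont : ∀ Q : Set P, Continuous (fun t => critExp (β t) Q) := by
    intro Q
    unfold critExp
    refine Continuous.div_const (continuous_finsetSum _ fun T _ => ?_) _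
    have hs : Continuous (fun t => shadowWeight (β t) Q T) := by
      unfold shadowWeight
      refine continuous_finsetSum _ fun A _ => ?_
      simp only [hβ]
      fun_prop
    exact (Real.continuous_mul_log.comp hs).neg
  have hβ0 : β 0 = α := by
    ext A; simp [hβ]
  have hev : ∀ Q : Finset P, ∀ᶠ t in nhdsWithin (0:ℝ) (Set.Ioi 0),
      Q.Nonempty → (c + c1) / 2 < critExp (β t) (Q : Set P) := by
    intro Q
    by_cases hQ : Q.Nonempty
    · have h1 := (hcont (Q : Set P)).tendsto 0
      have h2 : (c + c1) / 2 < critExp (β 0) (Q : Set P) := by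
        rw [hβ0]
        have := hαQ (Q : Set P) (by exact_mod_cast hQ)
        linarith
      have h3 := (h1.mono_left (nhdsWithin_le_nhds (s := Set.Ioi 0))).eventually (lt_mem_nhds h2)
      exact h3.mono fun t ht _ => ht
    · exact Filter.Eventually.of_forall fun t h => absurd h hQ
  have hlt1 : ∀ᶠ t in nhdsWithin (0:ℝ) (Set.Ioi 0), t < 1 :=
    nhdsWithin_le_nhds (gt_mem_nhds one_pos)
  obtain ⟨t, ⟨htQ, ht1⟩, ht0⟩ :=
    (((Filter.eventually_all.2 hev).and hlt1).and self_mem_nhdsWithin).exists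
  have ht0' : 0 < t := ht0
  refine ⟨β t, (c + c1) / 2, ⟨?_, ?_, ?_⟩, ?_, by linarith, htQ⟩
  · intro A hA
    simp only [hβ, hu, if_pos hA]
    have := hα.1 A hA
    have h1 : 0 ≤ 1 - t := by linarith
    positivity
  · intro A hA
    simp [hβ, hu, hA, hα.2.1 A hA]
  · simp only [hβ]
    rw [Finset.sum_add_distrib, ← Finset.mul_sum, ← Finset.mul_sum, hα.2.2]
    have : ∑ A ∈ antichains P, u A = 1 := by
      rw [Finset.sum_congr rfl (fun A hA => by simp only [hu]; rw [if_pos hA])]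
      rw [Finset.sum_const, nsmul_eq_mul, mul_inv_cancel₀ hN'.ne']
    rw [this]
    ring
  · intro x
    simp only [hβ, hu, if_pos (singleton_mem x)]
    have := hα.1 _ (singleton_mem x)
    have h1 : 0 ≤ 1 - t := by linarith
    positivity

/-- 1-statement of the existence threshold: if `0 < c < c_⋆(P)` and `p = e^{-cn}`, then
w.h.p. the random poset `𝒫(n,p)` contains an induced copy of `P`, i.e. the probability
that there is an injective map `φ` from `P` to the retained elements of `𝒫(n)` with
`φ x ⊆ φ y ↔ x ≤ y` tends to `1` as `n → ∞`. -/
theorem stmt7 (P : Type) [Fintype P] [PartialOrder P] [Nonempty P]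
    (c : ℝ) (hc0 : 0 < c) (hc : c < critStar P) :
    Filter.Tendsto (fun n : ℕ =>
        cubeProb n (Real.exp (-(c * n)))
          {ω : Finset (Fin n) → Bool | ∃ φ : P → Finset (Fin n),
            Function.Injective φ ∧ (∀ x y : P, φ x ⊆ φ y ↔ x ≤ y) ∧
              ∀ i, ω (φ i) = true})
      Filter.atTop (nhds 1) := by
  classical
  obtain ⟨α, h, hα, hpos, hch, hQ⟩ := exists_weighting c hc0 hc
  have hW := W_tendsto hα hpos h hQ
  set W : ℕ → ℝ := fun n => ∑ f : Fin n → Finset P, gw α h f with hWdef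
  set K : ℝ := ((Fintype.card (Finset P) * Fintype.card P ^ Fintype.card P : ℕ) : ℝ) with hK
  have hp1 : ∀ n : ℕ, Real.exp (-(c * n)) ≤ 1 := fun n =>
    Real.exp_le_one_iff.2 (neg_nonpos.2 (mul_nonneg hc0.le (Nat.cast_nonneg n)))
  have hexp : Filter.Tendsto (fun n : ℕ => Real.exp (-((h - c) * n))) Filter.atTop (nhds 0) := by
    refine Real.tendsto_exp_neg_atTop_nhds_zero.comp ?_
    exact Filter.Tendsto.const_mul_atTop (by linarith) tendsto_natCast_atTop_atTop
  have hlim : Filter.Tendsto (fun n : ℕ => W n ^ 2 /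
      (W n ^ 2 + W n * (K * Real.exp (-((h - c) * n))))) Filter.atTop (nhds 1) := by
    have := (hW.pow 2).div ((hW.pow 2).add (hW.mul (hexp.const_mul K))) (by norm_num)
    simp only [one_pow, mul_zero, add_zero, div_one] at this
    exact this
  refine tendsto_of_tendsto_of_tendsto_of_le_of_le hlim tendsto_const_nhds ?_ ?_
  · intro n
    simp only
    have hW0 : 0 ≤ W n := Finset.sum_nonneg fun f _ => gw_nonneg hα h f
    refine div_le_of_le_mul₀ (by positivity) ?_ ?_
    · exact Finset.sum_nonneg fun ω _ => wt_nonneg n _ (Real.exp_pos _).le (hp1 n) ω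
    have sm := second_moment n (Real.exp (-(c * n))) (Real.exp_pos _).le (hp1 n)
      (fun f : Fin n → Finset P => gw α h f) (fun f => img f)
      {ω : Finset (Fin n) → Bool | ∃ φ : P → Finset (Fin n),
            Function.Injective φ ∧ (∀ x y : P, φ x ⊆ φ y ↔ x ≤ y) ∧
              ∀ i, ω (φ i) = true} (by
        intro f hf ω hω
        have hg : Good α h f := by
          by_contra hcon
          exact hf (if_neg hcon)
        exact ⟨phi f, hg.inj, hg.2, fun i =>
          hω _ (Finset.mem_image_of_mem _ (Finset.mem_univ i))⟩)
    have e1 : ∑ f : Fin n → Finset P, gw α h f * Real.exp (-(c * n)) ^ (img f).card =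
        W n * Real.exp (-(c * n)) ^ Fintype.card P := by
      rw [hWdef]
      simp only
      rw [Finset.sum_mul]
      refine Finset.sum_congr rfl fun f _ => ?_
      by_cases hf : Good α h f
      · rw [hf.card_img]
      · have : gw α h f = 0 := if_neg hf
        rw [this, zero_mul, zero_mul]
    rw [e1] at sm
    have mb := moment_bound hα h c hch n
    have sm2 : (W n * Real.exp (-(c * n)) ^ Fintype.card P) ^ 2 ≤ _ :=
      sm.trans (mul_le_mul_of_nonneg_right ((le_of_eq (by congr!)).trans mb)
        (Finset.sum_nonneg fun ω _ => wt_nonneg n _ (Real.exp_pos _).le (hp1 n) ω))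
    rw [mul_pow, mul_comm, mul_assoc] at sm2
    have sm3 := le_of_mul_le_mul_left sm2 (by positivity)
    rw [mul_comm] at sm3
    exact sm3
  · intro n
    exact cubeProb_le_one n _ (Real.exp_pos _).le (hp1 n) _
end

section
/- Let P be a bounded finite poset with |P| ≥ 2, and let 𝒬 be the collection of subposets Q ⊆ P containing both min(P) and max(P). Then c_⋆(P) ≤ max_{x ∈ [1/a(P), 1/2]} min{ H_2(x), min_{Q ∈ 𝒬} −(1/|Q|)·( 2x log x + (1−2x) log( (1−2x)/(a(Q)−2) ) ) }. -/
/-- The binary entropy function `H₂(x) = -x log x - (1-x) log (1-x)` (natural log). -/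
noncomputable def H₂ (x : ℝ) : ℝ := -(x * Real.log x) - (1 - x) * Real.log (1 - x)

open Classical in
lemma mem_antichains' {P : Type*} [Fintype P] [PartialOrder P] (A : Finset P) :
    A ∈ antichains P ↔ IsAntichain (· ≤ ·) (A : Set P) := by
  simp [antichains]

open Classical in
lemma mem_antichainsIn' {P : Type*} [Fintype P] [PartialOrder P] (Q : Set P) (A : Finset P) :
    A ∈ antichainsIn Q ↔ IsAntichain (· ≤ ·) (A : Set P) ∧ (A : Set P) ⊆ Q := by
  simp [antichainsIn, mem_antichains']

lemma upperShadow_antichain {P : Type*} [PartialOrder P] (Q S : Set P) :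
    IsAntichain (· ≤ ·) (upperShadow Q S) := by
  intro a ha b hb hab hle
  obtain ⟨x, hx, hxa⟩ := ha.2.1
  exact hb.2.2 a ha.1 (lt_of_le_of_ne hle hab) x hx hxa

open Classical in
lemma sum_shadowWeight {P : Type*} [Fintype P] [PartialOrder P] (α : Finset P → ℝ)
    (h : IsWeighting α) (Q : Set P) : ∑ T ∈ antichainsIn Q, shadowWeight α Q T = 1 := by
  rw [← h.2.2, ← Finset.sum_fiberwise_of_maps_to
    (s := antichains P) (t := antichainsIn Q)
    (g := fun B : Finset P => (upperShadow Q (B : Set P)).toFinset)]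
  · refine Finset.sum_congr rfl fun T _ => ?_
    unfold shadowWeight
    refine Finset.sum_congr ?_ fun _ _ => rfl
    ext B
    simp only [Finset.mem_filter, ← Finset.coe_inj, Set.coe_toFinset]
  · intro B _
    rw [mem_antichainsIn']
    simp only [Set.coe_toFinset]
    exact ⟨upperShadow_antichain _ _, fun y hy => hy.1⟩

lemma shadowWeight_nonneg {P : Type*} [Fintype P] [PartialOrder P] (α : Finset P → ℝ)
    (h : IsWeighting α) (Q : Set P) (T : Finset P) : 0 ≤ shadowWeight α Q T := by
  unfold shadowWeight
  exact Finset.sum_nonneg fun A hA => h.1 A (Finset.mem_filter.1 hA).1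

lemma shadowWeight_eq {P : Type*} [Fintype P] [PartialOrder P] (α : Finset P → ℝ)
    (Q : Set P) (T A : Finset P) (hA : A ∈ antichains P)
    (h : ∀ B ∈ antichains P, upperShadow Q (B : Set P) = (T : Set P) ↔ B = A) :
    shadowWeight α Q T = α A := by
  classical
  unfold shadowWeight
  rw [Finset.sum_eq_single_of_mem A]
  · simp only [Finset.mem_filter]
    exact ⟨hA, (h A hA).2 rfl⟩
  · intro B hB hne
    rw [Finset.mem_filter] at hB
    exact absurd ((h B hB.1).1 hB.2) hne

lemma empty_anti (P : Type*) [Fintype P] [PartialOrder P] : (∅ : Finset P) ∈ antichains P := by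
  rw [mem_antichains']; simp

lemma single_anti {P : Type*} [Fintype P] [PartialOrder P] (a : P) :
    ({a} : Finset P) ∈ antichains P := by
  rw [mem_antichains']; simp

lemma shadowWeight_empty {P : Type*} [Fintype P] [PartialOrder P] (α : Finset P → ℝ)
    (Q : Set P) (top : P) (htop : ∀ x, x ≤ top) (hQ : top ∈ Q) :
    shadowWeight α Q ∅ = α ∅ := by
  refine shadowWeight_eq α Q ∅ ∅ (empty_anti P) fun B _ => ⟨fun h => ?_, ?_⟩
  · by_contra hne
    obtain ⟨b, hb⟩ := Finset.nonempty_iff_ne_empty.2 hne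
    obtain ⟨m, hm⟩ := (Set.toFinite {y : P | y ∈ Q ∧ ∃ x ∈ (B : Set P), x ≤ y}).exists_minimal
      ⟨top, hQ, b, hb, htop b⟩
    have : m ∈ upperShadow Q (B : Set P) := by
      refine ⟨hm.1.1, hm.1.2, fun z hz hlt x hx hxz => ?_⟩
      exact absurd (hm.2 ⟨hz, x, hx, hxz⟩ hlt.le) (not_le_of_gt hlt)
    rw [h] at this
    simp at this
  · rintro rfl
    ext y
    simp [upperShadow]

lemma shadowWeight_bot {P : Type*} [Fintype P] [PartialOrder P] (α : Finset P → ℝ)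
    (Q : Set P) (bot : P) (hbot : ∀ x, bot ≤ x) (hQ : bot ∈ Q) :
    shadowWeight α Q {bot} = α {bot} := by
  refine shadowWeight_eq α Q {bot} {bot} (single_anti bot) fun B hB => ⟨fun h => ?_, ?_⟩
  · rw [mem_antichains'] at hB
    have hm : bot ∈ upperShadow Q (B : Set P) := by rw [h]; simp
    obtain ⟨x, hx, hxb⟩ := hm.2.1
    have hx' : x = bot := le_antisymm hxb (hbot x)
    subst hx'
    ext y
    simp only [Finset.mem_singleton]
    refine ⟨fun hy => ?_, fun hy => hy ▸ hx⟩
    by_contra hne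
    exact hB hx hy (Ne.symm hne) (hbot y)
  · rintro rfl
    ext y
    simp only [upperShadow, Finset.coe_singleton, Set.mem_singleton_iff, Set.mem_ofPred_eq,
      forall_eq, exists_eq_left]
    constructor
    · rintro ⟨_, _, h3⟩
      by_contra hne
      exact h3 bot hQ (lt_of_le_of_ne (hbot y) (Ne.symm hne)) le_rfl
    · rintro rfl
      exact ⟨hQ, le_rfl, fun z _ hz => not_le_of_gt hz⟩

lemma antichainsIn_single {P : Type*} [Fintype P] [PartialOrder P] [DecidableEq P] (a : P) :
    antichainsIn ({a} : Set P) = {∅, {a}} := by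
  ext A
  rw [mem_antichainsIn']
  simp only [Finset.mem_insert, Finset.mem_singleton]
  constructor
  · rintro ⟨_, h⟩
    have : A ⊆ {a} := by intro y hy; simpa using h hy
    exact Finset.subset_singleton_iff.1 this
  · rintro (rfl | rfl) <;> simp

lemma H2_eq (x : ℝ) : H₂ x = Real.binEntropy x := by
  rw [Real.binEntropy_eq_negMulLog_add_negMulLog_one_sub]
  simp only [H₂, Real.negMulLog]
  ring

lemma critExp_single {P : Type*} [Fintype P] [PartialOrder P] (α : Finset P → ℝ)
    (h : IsWeighting α) (a : P) (T : Finset P) (hT : T = ∅ ∨ T = {a}) :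
    critExp α ({a} : Set P) = Real.binEntropy (shadowWeight α {a} T) := by
  classical
  have hs := sum_shadowWeight α h ({a} : Set P)
  have hne : (∅ : Finset P) ≠ {a} := (Finset.singleton_ne_empty a).symm
  unfold critExp
  rw [antichainsIn_single, Finset.sum_pair hne] at *
  rw [Real.binEntropy_eq_negMulLog_add_negMulLog_one_sub]
  simp only [Set.ncard_singleton, Nat.cast_one, div_one, Real.negMulLog]
  rcases hT with rfl | rfl
  · rw [← hs]; ring_nf
  · rw [← hs]; ring_nf

lemma jensen_two (u v a b : ℝ) (hu : 0 ≤ u) (hv : 0 ≤ v) (ha : 0 ≤ a) (hb : 0 ≤ b)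
    (hab : 0 < a + b) : a * Real.negMulLog u + b * Real.negMulLog v ≤
      (a + b) * Real.negMulLog ((a * u + b * v) / (a + b)) := by
  have := Real.concaveOn_negMulLog.2 (Set.mem_Ici.2 hu) (Set.mem_Ici.2 hv)
    (show 0 ≤ a / (a + b) by positivity) (show 0 ≤ b / (a + b) by positivity) (by field_simp)
  simp only [smul_eq_mul] at this
  have h2 := mul_le_mul_of_nonneg_left this hab.le
  have e1 : (a + b) * (a / (a + b) * Real.negMulLog u + b / (a + b) * Real.negMulLog v)
    = a * Real.negMulLog u + b * Real.negMulLog v := by field_simp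
  have e2 : a / (a + b) * u + b / (a + b) * v = (a * u + b * v) / (a + b) := by ring
  rw [e1, e2] at h2
  exact h2

lemma jensen_sum {ι : Type*} (s : Finset ι) (hs : s.Nonempty) (f : ι → ℝ)
    (hf : ∀ i ∈ s, 0 ≤ f i) :
    ∑ i ∈ s, Real.negMulLog (f i) ≤ s.card * Real.negMulLog ((∑ i ∈ s, f i) / s.card) := by
  have hc : (0:ℝ) < s.card := by exact_mod_cast hs.card_pos
  have := Real.concaveOn_negMulLog.le_map_sum (t := s) (w := fun _ => 1 / (s.card : ℝ)) (p := f)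
    (fun i _ => by positivity) (by simp; field_simp) hf
  simp only [smul_eq_mul, ← Finset.mul_sum] at this
  have h2 := mul_le_mul_of_nonneg_left this hc.le
  have e1 : (s.card : ℝ) * (1 / s.card * ∑ i ∈ s, Real.negMulLog (f i))
    = ∑ i ∈ s, Real.negMulLog (f i) := by field_simp
  rw [e1, one_div_mul_eq_div] at h2
  exact h2

/-- The auxiliary function `G_n(x) = 2 η(x) + n η((1-2x)/n)`. -/
noncomputable def Gfun (n x : ℝ) : ℝ :=
  2 * Real.negMulLog x + n * Real.negMulLog ((1 - 2 * x) / n)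

lemma Gfun_eq (n x : ℝ) (hn : 0 < n) : Gfun n x =
    -(2 * x * Real.log x + (1 - 2 * x) * Real.log ((1 - 2 * x) / n)) := by
  simp only [Gfun, Real.negMulLog]
  field_simp
  ring

lemma Gfun_concave (n : ℝ) (hn : 0 < n) : ConcaveOn ℝ (Set.Icc 0 (1/2)) (Gfun n) := by
  refine ⟨convex_Icc _ _, fun x hx y hy a b ha hb hab => ?_⟩
  have h1 := Real.concaveOn_negMulLog.2 (Set.mem_Ici.2 hx.1) (Set.mem_Ici.2 hy.1) ha hb hab
  have h2 := Real.concaveOn_negMulLog.2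
    (show (1 - 2 * x) / n ∈ Set.Ici 0 from div_nonneg (by linarith [hx.2]) hn.le)
    (show (1 - 2 * y) / n ∈ Set.Ici 0 from div_nonneg (by linarith [hy.2]) hn.le) ha hb hab
  simp only [smul_eq_mul, Gfun] at *
  have e : a * ((1 - 2 * x) / n) + b * ((1 - 2 * y) / n) = (1 - 2 * (a * x + b * y)) / n := by
    rw [← hab] 
    field_simp
    have : b = 1 - a := by linarith
    subst this
    ring
  rw [e] at h2
  have h3 := mul_le_mul_of_nonneg_left h2 hn.le
  linarith

lemma Gfun_mono (n x t : ℝ) (hn : 1 ≤ n) (hx : 0 ≤ x) (hxt : x ≤ t) (ht : t ≤ 1 / (n + 2)) :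
    Gfun n x ≤ Gfun n t := by
  have hn0 : 0 < n := by linarith
  have hm2 : 1 / (n + 2) ≤ 1 / 2 := one_div_le_one_div_of_le (by norm_num) (by linarith)
  have hm : Gfun n x ≤ Gfun n (1 / (n + 2)) := by
    have := jensen_two x ((1 - 2 * x) / n) 2 n hx (div_nonneg (by linarith) hn0.le)
      (by norm_num) hn0.le (by linarith)
    have e1 : (2 * x + n * ((1 - 2 * x) / n)) / (2 + n) = 1 / (n + 2) := by
      field_simp
      ring
    have e2 : (1 - 2 * (1 / (n + 2))) / n = 1 / (n + 2) := by
      field_simp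
      ring
    simp only [Gfun]
    rw [e1] at this
    rw [e2]
    linarith
  have := (Gfun_concave n hn0).min_le_of_mem_Icc (x := x) (y := 1 / (n+2)) (z := t)
    ⟨hx, by linarith⟩ ⟨by positivity, hm2⟩ ⟨hxt, ht⟩
  rwa [min_eq_left hm] at this

lemma entropy_bound {P : Type*} [Fintype P] [PartialOrder P] (α : Finset P → ℝ)
    (h : IsWeighting α) (bot top : P) (hne : bot ≠ top)
    (hbot : ∀ x, bot ≤ x) (htop : ∀ x, x ≤ top) (Q : Set P) (hbQ : bot ∈ Q) (htQ : top ∈ Q) :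
    3 ≤ (antichainsIn Q).card ∧
    critExp α Q ≤ Gfun ((antichainsIn Q).card - 2) ((α ∅ + α {bot}) / 2) / Q.ncard := by
  classical
  have h0 : (∅ : Finset P) ∈ antichainsIn Q := by rw [mem_antichainsIn']; simp
  have h1 : ({bot} : Finset P) ∈ antichainsIn Q := by rw [mem_antichainsIn']; simpa using hbQ
  have h2 : ({top} : Finset P) ∈ antichainsIn Q := by rw [mem_antichainsIn']; simpa using htQ
  have hb0 : ({bot} : Finset P) ≠ ∅ := Finset.singleton_ne_empty _
  have ht0 : ({top} : Finset P) ≠ ∅ := Finset.singleton_ne_empty _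
  have htb : ({top} : Finset P) ≠ {bot} := fun h => hne (Finset.singleton_injective h).symm
  set R := ((antichainsIn Q).erase ∅).erase {bot} with hR
  have h1' : ({bot} : Finset P) ∈ (antichainsIn Q).erase ∅ := by simp [h1]
  have hRne : R.Nonempty := ⟨{top}, by simp [hR, htb, h2]⟩
  have hc : R.card + 2 = (antichainsIn Q).card := by
    have := Finset.card_erase_add_one h0
    have := Finset.card_erase_add_one h1'
    rw [hR]
    omega
  have hRc := hRne.card_pos
  refine ⟨by omega, ?_⟩
  have hcr : ((antichainsIn Q).card : ℝ) - 2 = R.card := by rw [← hc]; push_cast; ring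
  have split : ∀ f : Finset P → ℝ, ∑ T ∈ antichainsIn Q, f T = f ∅ + f {bot} + ∑ T ∈ R, f T := by
    intro f
    rw [← Finset.add_sum_erase _ f h0, ← Finset.add_sum_erase _ f h1', add_assoc]
  have hs := sum_shadowWeight α h Q
  rw [split, shadowWeight_empty α Q top htop htQ, shadowWeight_bot α Q bot hbot hbQ] at hs
  have hj := jensen_sum R hRne (shadowWeight α Q) (fun i _ => shadowWeight_nonneg α h Q i)
  have hj2 := jensen_two (α ∅) (α {bot}) 1 1 (h.1 _ (empty_anti P)) (h.1 _ (single_anti bot))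
    (by norm_num) (by norm_num) (by norm_num)
  unfold critExp
  refine div_le_div_of_nonneg_right ?_ (Nat.cast_nonneg _)
  rw [split, shadowWeight_empty α Q top htop htQ, shadowWeight_bot α Q bot hbot hbQ, hcr]
  have e : ∑ T ∈ R, shadowWeight α Q T = 1 - 2 * ((α ∅ + α {bot}) / 2) := by linarith
  rw [e] at hj
  have e2 : (1 * α ∅ + 1 * α {bot}) / (1 + 1) = (α ∅ + α {bot}) / 2 := by ring
  rw [e2] at hj2
  simp only [Gfun]
  simp only [Real.negMulLog, neg_mul] at hj hj2 ⊢
  linarith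

/-- Upper bound for `c_⋆(P)` for a bounded poset `P` with `|P| ≥ 2`:
`c_⋆(P) ≤ max_{x ∈ [1/a(P), 1/2]} min { H₂(x),
  min_{Q ∈ 𝒬} -(1/|Q|) (2x log x + (1-2x) log ((1-2x)/(a(Q)-2))) }`,
where `𝒬` is the collection of subposets of `P` containing both the minimum and the
maximum element of `P`. -/
theorem stmt11 (P : Type) [Fintype P] [PartialOrder P]
    (hcard : 2 ≤ Fintype.card P)
    (bot top : P) (hbot : ∀ x, bot ≤ x) (htop : ∀ x, x ≤ top) :
    critStar P ≤
      sSup {v : ℝ | ∃ x ∈ Set.Icc (1 / ((antichains P).card : ℝ)) (1 / 2),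
        v = min (H₂ x)
          (sInf {w : ℝ | ∃ Q : Set P, bot ∈ Q ∧ top ∈ Q ∧
            w = -(1 / (Q.ncard : ℝ)) * (2 * x * Real.log x +
              (1 - 2 * x) * Real.log ((1 - 2 * x) / (((antichainsIn Q).card : ℝ) - 2)))})} := by
  classical
  have hne : bot ≠ top := by
    rintro rfl
    have : Fintype.card P ≤ 1 :=
      Fintype.card_le_one_iff.2 fun a b =>
        (le_antisymm (htop a) (hbot a)).trans (le_antisymm (htop b) (hbot b)).symm
    omega
  have hsub : ∀ Q : Set P, (antichainsIn Q).card ≤ (antichains P).card := fun Q =>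
    Finset.card_le_card (Finset.filter_subset _ _)
  -- everything below the two bounds is below the right-hand side
  have key : ∀ c x : ℝ, x ∈ Set.Icc (1 / ((antichains P).card : ℝ)) (1 / 2) → c ≤ H₂ x →
      (∀ Q : Set P, bot ∈ Q → top ∈ Q →
        c ≤ Gfun ((antichainsIn Q).card - 2) x / Q.ncard) →
      (∀ Q : Set P, bot ∈ Q → top ∈ Q → 3 ≤ (antichainsIn Q).card) →
      c ≤ sSup {v : ℝ | ∃ x ∈ Set.Icc (1 / ((antichains P).card : ℝ)) (1 / 2),
        v = min (H₂ x)
          (sInf {w : ℝ | ∃ Q : Set P, bot ∈ Q ∧ top ∈ Q ∧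
            w = -(1 / (Q.ncard : ℝ)) * (2 * x * Real.log x +
              (1 - 2 * x) * Real.log ((1 - 2 * x) / (((antichainsIn Q).card : ℝ) - 2)))})} := by
    intro c x hx hc hQ h3
    refine le_csSup_of_le ⟨Real.log 2, ?_⟩ ⟨x, hx, rfl⟩ (le_min hc ?_)
    · rintro v ⟨y, _, rfl⟩
      refine (min_le_left _ _).trans ?_
      rw [H2_eq]
      exact Real.binEntropy_le_log_two
    · refine le_csInf ⟨_, Set.univ, trivial, trivial, rfl⟩ ?_
      rintro w ⟨Q, hb, ht, rfl⟩
      refine (hQ Q hb ht).trans (le_of_eq ?_)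
      have : (3 : ℝ) ≤ (antichainsIn Q).card := by exact_mod_cast h3 Q hb ht
      rw [Gfun_eq _ _ (by linarith)]
      ring
  -- the indicator weighting of the empty antichain shows that antichain counts are at least 3
  have h3 : ∀ Q : Set P, bot ∈ Q → top ∈ Q → 3 ≤ (antichainsIn Q).card := by
    intro Q hb ht
    have hw : IsWeighting (fun A : Finset P => if A = ∅ then (1 : ℝ) else 0) := by
      refine ⟨fun A _ => by positivity, fun A hA => ?_, ?_⟩
      · have : A ≠ ∅ := fun h => hA (h ▸ empty_anti P)
        simp [this]
      · simp [empty_anti P]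
    exact (entropy_bound _ hw bot top hne hbot htop Q hb ht).1
  have haP : (3 : ℝ) ≤ (antichains P).card := by
    exact_mod_cast (h3 Set.univ trivial trivial).trans (hsub _)
  have haP2 : 1 / ((antichains P).card : ℝ) ≤ 1 / 2 :=
    one_div_le_one_div_of_le (by norm_num) (by linarith)
  refine Real.sSup_le ?_ ?_
  · rintro c ⟨_, α, hα, hc⟩
    have hp := hα.1 _ (empty_anti P)
    have hq := hα.1 _ (single_anti bot)
    have hpq : α ∅ + α {bot} ≤ 1 := by
      rw [← hα.2.2, ← Finset.sum_pair (Finset.singleton_ne_empty bot).symm]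
      refine Finset.sum_le_sum_of_subset_of_nonneg ?_ fun A hA _ => hα.1 A hA
      intro A hA
      simp only [Finset.mem_insert, Finset.mem_singleton] at hA
      rcases hA with rfl | rfl
      · exact empty_anti P
      · exact single_anti bot
    have c1 : c ≤ Real.binEntropy (α ∅) := by
      rw [← shadowWeight_empty α {top} top htop rfl, ← critExp_single α hα top ∅ (Or.inl rfl)]
      exact hc _ ⟨top, rfl⟩
    have c2 : c ≤ Real.binEntropy (α {bot}) := by
      rw [← shadowWeight_bot α {bot} bot hbot rfl, ← critExp_single α hα bot {bot} (Or.inr rfl)]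
      exact hc _ ⟨bot, rfl⟩
    set x := (α ∅ + α {bot}) / 2 with hx
    have hx0 : 0 ≤ x := by rw [hx]; linarith
    have hx1 : x ≤ 1 / 2 := by rw [hx]; linarith
    have c3 : c ≤ Real.binEntropy x := by
      have := Real.strictConcave_binEntropy.concaveOn.2
        (show α ∅ ∈ Set.Icc 0 1 from ⟨hp, by linarith⟩)
        (show α {bot} ∈ Set.Icc 0 1 from ⟨hq, by linarith⟩)
        (show (0 : ℝ) ≤ 1 / 2 by norm_num) (show (0 : ℝ) ≤ 1 / 2 by norm_num) (by norm_num)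
      simp only [smul_eq_mul] at this
      have e : 1 / 2 * α ∅ + 1 / 2 * α {bot} = x := by rw [hx]; ring
      rw [e] at this
      linarith
    have cQ : ∀ Q : Set P, bot ∈ Q → top ∈ Q →
        c ≤ Gfun ((antichainsIn Q).card - 2) x / Q.ncard := fun Q hb ht =>
      (hc Q ⟨bot, hb⟩).trans (entropy_bound α hα bot top hne hbot htop Q hb ht).2
    rcases le_or_gt (1 / ((antichains P).card : ℝ)) x with hle | hlt
    · exact key c x ⟨hle, hx1⟩ (by rwa [H2_eq]) cQ h3
    · refine key c _ ⟨le_rfl, haP2⟩ ?_ (fun Q hb ht => (cQ Q hb ht).trans ?_) h3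
      · rw [H2_eq]
        refine c3.trans (Real.binEntropy_strictMonoOn.monotoneOn ⟨hx0, ?_⟩ ⟨?_, ?_⟩ hlt.le)
        · norm_num at hx1 ⊢; exact hx1
        · positivity
        · norm_num at haP2 ⊢; exact haP2
      · refine div_le_div_of_nonneg_right ?_ (Nat.cast_nonneg _)
        have h3' : (3 : ℝ) ≤ (antichainsIn Q).card := by exact_mod_cast h3 Q hb ht
        have h4 : ((antichainsIn Q).card : ℝ) ≤ (antichains P).card := by exact_mod_cast hsub Q
        refine Gfun_mono _ _ _ (by linarith) hx0 hlt.le ?_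
        rw [sub_add_cancel]
        exact one_div_le_one_div_of_le (by linarith) h4
  · refine key 0 (1/2) ⟨haP2, le_rfl⟩ ?_ (fun Q hb ht => ?_) h3
    · rw [H2_eq]
      exact Real.binEntropy_nonneg (by norm_num) (by norm_num)
    · refine div_nonneg ?_ (Nat.cast_nonneg _)
      have : 0 ≤ Real.negMulLog (1/2) := Real.negMulLog_nonneg (by norm_num) (by norm_num)
      simp [Gfun] at this ⊢
      exact this
end

section
/- There is a unique x_⋆ in the interval [1/5, 1/2] satisfying (1−x_⋆)·log 2 − H_2(x_⋆) = 0, and for every integer t ≥ 2 the star poset C(1,t) satisfies c_⋆(C(1,t)) = H_2(x_⋆) (≈ 0.5357390). -/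
/-- The layered poset `C(s 0, …, s (ℓ-1))`: disjoint antichains `V 0, …, V (ℓ-1)` with
`|V i| = s i`, where `x < y` precisely when `x` lies in an earlier layer than `y`. -/
def Layered (ℓ : ℕ) (s : Fin ℓ → ℕ) : Type := (i : Fin ℓ) × Fin (s i)

instance (ℓ : ℕ) (s : Fin ℓ → ℕ) : PartialOrder (Layered ℓ s) where
  le x y := x.1 < y.1 ∨ x = y
  le_refl x := Or.inr rfl
  le_trans x y z hxy hyz := by
    rcases hxy with h | h
    · rcases hyz with h' | h'
      · exact Or.inl (h.trans h')
      · subst h'; exact Or.inl h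
    · subst h; exact hyz
  le_antisymm x y hxy hyx := by
    rcases hxy with h | h
    · rcases hyx with h' | h'
      · exact absurd (h.trans h') (lt_irrefl _)
      · exact h'.symm
    · exact h

instance (ℓ : ℕ) (s : Fin ℓ → ℕ) : Fintype (Layered ℓ s) :=
  inferInstanceAs (Fintype ((i : Fin ℓ) × Fin (s i)))

section Star

open Finset Real

theorem H₂_eq_binEntropy (x : ℝ) : H₂ x = binEntropy x := by
  rw [binEntropy_eq_negMulLog_add_negMulLog_one_sub]
  unfold H₂ negMulLog
  ring

theorem H₂_eq_add (x : ℝ) : H₂ x = negMulLog x + negMulLog (1 - x) := by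
  rw [H₂_eq_binEntropy, binEntropy_eq_negMulLog_add_negMulLog_one_sub]

theorem star_strictMono :
    StrictMonoOn (fun x : ℝ => H₂ x - (1 - x) * log 2) (Set.Icc (1 / 5 : ℝ) (1 / 2)) := by
  intro x hx y hy hxy
  have h := binEntropy_strictMonoOn (a := x) (b := y)
    ⟨by linarith [hx.1], by norm_num at hx ⊢; exact hx.2⟩
    ⟨by linarith [hy.1], by norm_num at hy ⊢; exact hy.2⟩ hxy
  have hl : 0 < log 2 := log_pos (by norm_num)
  simp only [H₂_eq_binEntropy]
  nlinarith

theorem star_exists : ∃ x ∈ Set.Icc (1 / 5 : ℝ) (1 / 2), H₂ x - (1 - x) * log 2 = 0 := by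
  have hc : ContinuousOn (fun x : ℝ => H₂ x - (1 - x) * log 2) (Set.Icc (1 / 5 : ℝ) (1 / 2)) := by
    simp only [H₂_eq_binEntropy]
    apply Continuous.continuousOn
    exact binEntropy_continuous.sub (by fun_prop)
  have hl : 0 < log 2 := log_pos (by norm_num)
  have := intermediate_value_Icc (by norm_num : (1 / 5 : ℝ) ≤ 1 / 2) hc
  have h0 : (0 : ℝ) ∈ Set.Icc (H₂ (1 / 5) - (1 - 1 / 5) * log 2)
      (H₂ (1 / 2) - (1 - 1 / 2) * log 2) := by
    constructor
    · have e1 : log (1 / 5 : ℝ) = - log 5 := by simp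
      have e2 : log (1 - 1 / 5 : ℝ) = 2 * log 2 - log 5 := by
        rw [show (1 - 1 / 5 : ℝ) = 2 ^ 2 / 5 by norm_num, log_div (by norm_num) (by norm_num),
          log_pow]
        norm_num
      have e3 : 5 * log 5 ≤ 12 * log 2 := by
        have := log_le_log (by norm_num) (by norm_num : (5 : ℝ) ^ 5 ≤ 2 ^ 12)
        rw [log_pow, log_pow] at this
        exact_mod_cast this
      unfold H₂
      rw [e1, e2]
      linarith
    · rw [H₂_eq_binEntropy, one_div, binEntropy_two_inv]
      linarith
  obtain ⟨x, hx, h⟩ := this h0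
  exact ⟨x, hx, h⟩

/-- Tangent line bound for the binary entropy. -/
theorem H₂_tangent (x p : ℝ) (hx0 : 1 / 5 ≤ x) (hx : x ≤ 1 / 2) (hp0 : x ≤ p) (hp1 : p ≤ 1) :
    H₂ p ≤ H₂ x + (p - x) * (2 * log 2) := by
  have hl : log (1 - x) - log x ≤ 2 * log 2 := by
    have : log (1 - x) ≤ log (2 ^ 2 * x) := log_le_log (by linarith) (by linarith)
    rw [log_mul (by norm_num) (by linarith), log_pow] at this
    push_cast at this
    linarith
  have key : ∀ a q : ℝ, 0 ≤ a → 0 < q → -(a * log a) ≤ -(a * log q) + q - a := by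
    intro a q ha hq
    rcases ha.eq_or_lt with rfl | ha
    · simp; exact hq.le
    · have := log_le_sub_one_of_pos (div_pos hq ha)
      rw [log_div hq.ne' ha.ne'] at this
      have h2 := mul_le_mul_of_nonneg_left this ha.le
      have : a * (q / a - 1) = q - a := by field_simp
      linarith
  have k1 := key p x (by linarith) (by linarith)
  have k2 := key (1 - p) (1 - x) (by linarith) (by linarith)
  have k3 := mul_le_mul_of_nonneg_left hl (by linarith : 0 ≤ p - x)
  unfold H₂
  linarith

theorem negMulLog_div_pow (r : ℝ) (k : ℕ) :
    (2 : ℝ) ^ k * negMulLog (r / 2 ^ k) = negMulLog r + r * (k * log 2) := by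
  have h2 : (2 : ℝ) ^ k ≠ 0 := by positivity
  rw [div_eq_mul_inv, negMulLog_mul]
  simp only [negMulLog, log_inv, log_pow]
  field_simp

theorem star_antichains {P : Type*} [Fintype P] [PartialOrder P] [DecidableEq P] (b : P)
    (hb : ∀ y, b ≤ y) (htop : ∀ x y : P, x ≠ b → x ≤ y → x = y)
    :
    antichains P = insert {b} (univ.erase b).powerset := by
  ext A
  simp only [antichains, mem_filter, mem_univ, true_and, mem_insert, mem_powerset]
  constructor
  · intro h
    by_cases hbA : b ∈ A
    · left
      ext y
      simp only [mem_singleton]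
      constructor
      · intro hy
        by_contra hne
        exact h hbA hy (Ne.symm hne) (hb y)
      · rintro rfl; exact hbA
    · right
      intro y hy
      simp only [mem_erase, mem_univ, and_true]
      rintro rfl
      exact hbA hy
  · rintro (rfl | h)
    · simp
    · intro x hx y hy hne hle
      have := h hx
      simp only [mem_erase, mem_univ, and_true] at this
      exact hne (htop x y this hle)

theorem star_shadow_top {P : Type*} [Fintype P] [PartialOrder P] [DecidableEq P] (b : P)
    (hb : ∀ y, b ≤ y) (htop : ∀ x y : P, x ≠ b → x ≤ y → x = y)
    (Q A : Finset P) (hA : A ⊆ univ.erase b) :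
    upperShadow (Q : Set P) (A : Set P) = ((A ∩ Q : Finset P) : Set P) := by
  have hA' : ∀ x ∈ A, x ≠ b := fun x hx => by simpa using hA hx
  ext y
  simp only [upperShadow, Set.mem_ofPred_eq, mem_coe, mem_inter]
  constructor
  · rintro ⟨h1, ⟨x, hx, hxy⟩, -⟩
    rw [← htop x y (hA' x hx) hxy]
    refine ⟨hx, ?_⟩
    rw [htop x y (hA' x hx) hxy]
    exact h1
  · rintro ⟨h1, h2⟩
    refine ⟨h2, ⟨y, h1, le_rfl⟩, ?_⟩
    intro z hz hzy x hx hxz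
    have e := htop x z (hA' x hx) hxz
    subst e
    exact hzy.ne (htop x y (hA' x hx) hzy.le)

theorem star_shadow_bot_mem {P : Type*} [Fintype P] [PartialOrder P] [DecidableEq P] (b : P)
    (hb : ∀ y, b ≤ y) (htop : ∀ x y : P, x ≠ b → x ≤ y → x = y)
    (Q : Finset P) (hQ : b ∈ Q) :
    upperShadow (Q : Set P) (({b} : Finset P) : Set P) = (({b} : Finset P) : Set P) := by
  ext y
  simp only [upperShadow, Set.mem_ofPred_eq, mem_coe, mem_singleton]
  constructor
  · rintro ⟨h1, -, h3⟩
    by_contra hne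
    exact h3 b hQ (lt_of_le_of_ne (hb y) (Ne.symm hne)) b rfl le_rfl
  · rintro rfl
    exact ⟨hQ, ⟨y, rfl, le_rfl⟩, fun z _ hzy => absurd (hb z) hzy.not_ge⟩

theorem star_shadow_bot_not_mem {P : Type*} [Fintype P] [PartialOrder P] [DecidableEq P] (b : P)
    (hb : ∀ y, b ≤ y) (htop : ∀ x y : P, x ≠ b → x ≤ y → x = y)
    (Q : Finset P) (hQ : b ∉ Q) :
    upperShadow (Q : Set P) (({b} : Finset P) : Set P) = (Q : Set P) := by
  ext y
  simp only [upperShadow, Set.mem_ofPred_eq, mem_coe, mem_singleton]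
  constructor
  · exact fun h => h.1
  · intro hy
    refine ⟨hy, ⟨b, rfl, hb y⟩, ?_⟩
    intro z hz hzy
    exact absurd (htop z y (fun h => hQ (h ▸ hz)) hzy.le) hzy.ne

/-- Formula for the shadow weights. -/
theorem star_weight {P : Type*} [Fintype P] [PartialOrder P] [DecidableEq P] (b : P)
    (hb : ∀ y, b ≤ y) (htop : ∀ x y : P, x ≠ b → x ≤ y → x = y)
    (α : Finset P → ℝ) (Q T : Finset P) :
    shadowWeight α (Q : Set P) T =
      (if (if b ∈ Q then {b} else Q) = T then α {b} else 0) +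
        ∑ A ∈ (univ.erase b).powerset with A ∩ Q = T, α A := by
  classical
  have hn : ({b} : Finset P) ∉ (univ.erase b).powerset := by simp
  unfold shadowWeight
  rw [star_antichains b hb htop, sum_filter, sum_insert hn, sum_filter]
  congr 1
  · by_cases h : b ∈ Q
    · rw [star_shadow_bot_mem b hb htop Q h]
      simp only [h, coe_inj, if_true]
    · rw [star_shadow_bot_not_mem b hb htop Q h]
      simp only [h, coe_inj, if_false]
  · apply sum_congr rfl
    intro A hA
    rw [star_shadow_top b hb htop Q A (mem_powerset.1 hA)]
    simp only [coe_inj]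

theorem star_antichainsIn_mem {P : Type*} [Fintype P] [PartialOrder P] [DecidableEq P] (b : P)
    (hb : ∀ y, b ≤ y) (htop : ∀ x y : P, x ≠ b → x ≤ y → x = y)
    (Q : Finset P) (hQ : b ∈ Q) :
    antichainsIn (Q : Set P) = insert {b} (Q.erase b).powerset := by
  ext A
  simp only [antichainsIn, star_antichains b hb htop, mem_filter, mem_insert, mem_powerset,
    coe_subset]
  constructor
  · rintro ⟨rfl | h, h2⟩
    · simp
    · right
      intro x hx
      have := h hx
      simp at this
      simp [this, h2 hx]
  · rintro (rfl | h)
    · simp [hQ]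
    · exact ⟨Or.inr (h.trans (erase_subset_erase _ (subset_univ _))), h.trans (erase_subset _ _)⟩

theorem star_antichainsIn_not_mem {P : Type*} [Fintype P] [PartialOrder P] [DecidableEq P] (b : P)
    (hb : ∀ y, b ≤ y) (htop : ∀ x y : P, x ≠ b → x ≤ y → x = y)
    (Q : Finset P) (hQ : b ∉ Q) :
    antichainsIn (Q : Set P) = Q.powerset := by
  ext A
  simp only [antichainsIn, star_antichains b hb htop, mem_filter, mem_insert, mem_powerset,
    coe_subset]
  constructor
  · exact fun h => h.2
  · intro h
    refine ⟨Or.inr ?_, h⟩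
    intro x hx
    simp only [mem_erase, mem_univ, and_true]
    rintro rfl
    exact hQ (h hx)

theorem star_count {P : Type*} [Fintype P] [DecidableEq P] (b : P)
    (Q T : Finset P) (hT : T ⊆ Q.erase b) :
    #{A ∈ (univ.erase b).powerset | A ∩ Q = T} * 2 ^ #(Q.erase b) = 2 ^ #(univ.erase b) := by
  have e : {A ∈ (univ.erase b).powerset | A ∩ Q = T} = Finset.Icc T (T ∪ (univ.erase b \ Q)) := by
    ext A
    simp only [mem_filter, mem_powerset, mem_Icc]
    constructor
    · rintro ⟨h1, rfl⟩
      refine ⟨inter_subset_left, ?_⟩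
      intro x hx
      have := h1 hx
      simp at this
      by_cases hq : x ∈ Q <;> simp [hx, hq, this]
    · rintro ⟨h1, h2⟩
      constructor
      · intro x hx
        have := h2 hx
        simp only [mem_union, mem_sdiff] at this
        rcases this with h | h
        · have := hT h
          simp at this
          simp [this]
        · exact h.1
      · ext x
        simp only [mem_inter]
        constructor
        · rintro ⟨hx, hq⟩
          have := h2 hx
          simp only [mem_union, mem_sdiff] at this
          tauto
        · intro hx
          exact ⟨h1 hx, erase_subset _ _ (hT hx)⟩
  have hd : Disjoint T (univ.erase b \ Q) := by
    rw [disjoint_left]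
    intro x hx h
    exact (mem_sdiff.1 h).2 (erase_subset _ _ (hT hx))
  rw [e, card_Icc_finset subset_union_left, card_union_of_disjoint hd, Nat.add_sub_cancel_left,
    ← pow_add]
  congr 1
  have : Q.erase b = univ.erase b ∩ Q := by
    ext x; simp
  rw [this]
  exact card_sdiff_add_card_inter _ _

theorem star_sum_uniform {P : Type*} [Fintype P] [DecidableEq P] (b : P)
    (r : ℝ) (Q T : Finset P) (hT : T ⊆ Q.erase b) :
    ∑ A ∈ (univ.erase b).powerset with A ∩ Q = T, r / 2 ^ #(univ.erase b)
      = r / 2 ^ #(Q.erase b) := by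
  have h := star_count b Q T hT
  have h' : (#{A ∈ (univ.erase b).powerset | A ∩ Q = T} : ℝ) * 2 ^ #(Q.erase b)
      = 2 ^ #(univ.erase b) := by exact_mod_cast h
  rw [sum_const, nsmul_eq_mul, ← h']
  have h2 : (2 : ℝ) ^ #(Q.erase b) ≠ 0 := by positivity
  have h3 : (#{A ∈ (univ.erase b).powerset | A ∩ Q = T} : ℝ) ≠ 0 := by
    intro h0
    rw [h0, zero_mul] at h'
    have : (2 : ℝ) ^ #(univ.erase b) ≠ 0 := by positivity
    exact this h'.symm
  field_simp

theorem star_lower {P : Type*} [Fintype P] [PartialOrder P] [DecidableEq P] (b : P)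
    (hb : ∀ y, b ≤ y) (htop : ∀ x y : P, x ≠ b → x ≤ y → x = y)
    (p : ℝ) (hp0 : 0 ≤ p) (hp1 : p ≤ 1) (hp : H₂ p = (1 - p) * log 2) :
    ∃ α : Finset P → ℝ, IsWeighting α ∧
      ∀ Q : Set P, Q.Nonempty → H₂ p ≤ critExp α Q := by
  classical
  set α : Finset P → ℝ := fun A =>
    if A = {b} then p else if A ⊆ univ.erase b then (1 - p) / 2 ^ #(univ.erase b) else 0 with hα
  have hn : ({b} : Finset P) ∉ (univ.erase b).powerset := by simp
  have hαb : α {b} = p := by simp [hα]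
  have hαt : ∀ A ∈ (univ.erase b).powerset, α A = (1 - p) / 2 ^ #(univ.erase b) := by
    intro A hA
    have : A ≠ {b} := fun h => hn (h ▸ hA)
    simp only [hα, if_neg this, if_pos (mem_powerset.1 hA)]
  refine ⟨α, ⟨?_, ?_, ?_⟩, ?_⟩
  · intro A hA
    have : 0 ≤ 1 - p := by linarith
    simp only [hα]
    split_ifs <;> positivity
  · intro A hA
    rw [star_antichains b hb htop, mem_insert, mem_powerset, not_or] at hA
    simp only [hα, if_neg hA.1, if_neg hA.2]
  · rw [star_antichains b hb htop, sum_insert hn, sum_congr rfl hαt, hαb, sum_const,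
      card_powerset, nsmul_eq_mul]
    push_cast
    field_simp
    ring
  · intro Q' hQ'
    obtain ⟨Q, rfl⟩ : ∃ Q : Finset P, (Q : Set P) = Q' := ⟨Q'.toFinset, by simp⟩
    have hQpos : 0 < #Q := by
      rw [card_pos]; exact_mod_cast hQ'
    have hw : ∀ T, shadowWeight α (Q : Set P) T =
      (if (if b ∈ Q then {b} else Q) = T then p else 0) +
        ∑ A ∈ (univ.erase b).powerset with A ∩ Q = T, (1 - p) / 2 ^ #(univ.erase b) := by
      intro T
      rw [star_weight b hb htop, hαb]
      congr 1
      exact sum_congr rfl fun A hA => hαt A (mem_filter.1 hA).1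
    unfold critExp
    rw [Set.ncard_coe_finset, le_div_iff₀ (by exact_mod_cast hQpos)]
    simp only [← neg_mul]
    change _ ≤ ∑ T ∈ _, negMulLog (shadowWeight α (Q : Set P) T)
    by_cases hbQ : b ∈ Q
    · have hn' : ({b} : Finset P) ∉ (Q.erase b).powerset := by simp
      rw [star_antichainsIn_mem b hb htop Q hbQ, sum_insert hn']
      have h1 : shadowWeight α (Q : Set P) {b} = p := by
        rw [hw, if_pos hbQ, if_pos rfl, add_eq_left]
        apply sum_eq_zero
        intro A hA
        rw [mem_filter, mem_powerset] at hA
        have : b ∈ A ∩ Q := by rw [hA.2]; simp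
        have := hA.1 (mem_inter.1 this).1
        simp at this
      have h2 : ∀ T ∈ (Q.erase b).powerset, negMulLog (shadowWeight α (Q : Set P) T)
          = negMulLog ((1 - p) / 2 ^ #(Q.erase b)) := by
        intro T hT
        have : ({b} : Finset P) ≠ T := fun h => hn' (h ▸ hT)
        rw [hw, if_pos hbQ, if_neg this, zero_add, star_sum_uniform b _ Q T (mem_powerset.1 hT)]
      rw [h1, sum_congr rfl h2, sum_const, card_powerset, nsmul_eq_mul]
      push_cast
      rw [negMulLog_div_pow, ← card_erase_add_one hbQ, ← add_assoc, ← H₂_eq_add, hp]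
      push_cast
      apply le_of_eq
      ring
    · rw [star_antichainsIn_not_mem b hb htop Q hbQ]
      have hk : Q.erase b = Q := erase_eq_of_notMem hbQ
      have h2 : ∀ T ∈ Q.powerset, (1 - p) * negMulLog (1 / 2 ^ #Q) ≤
          negMulLog (shadowWeight α (Q : Set P) T) := by
        intro T hT
        rw [hw, if_neg hbQ, star_sum_uniform b _ Q T (by rw [hk]; exact mem_powerset.1 hT), hk]
        have hcv := concaveOn_negMulLog.2 (x := if Q = T then 1 else 0) (y := 1 / 2 ^ #Q)
          (by simp only [Set.mem_Ici]; split_ifs <;> norm_num) (by simp only [Set.mem_Ici]; positivity)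
          hp0 (by linarith : 0 ≤ 1 - p) (by ring)
        simp only [smul_eq_mul] at hcv
        have e0 : negMulLog (if Q = T then 1 else 0) = 0 := by split_ifs <;> simp
        have e1 : p * (if Q = T then (1 : ℝ) else 0) + (1 - p) * (1 / 2 ^ #Q)
          = (if Q = T then p else 0) + (1 - p) / 2 ^ #Q := by
          split_ifs <;> ring
        rw [e0, e1] at hcv
        linarith
      refine le_trans ?_ (sum_le_sum h2)
      rw [sum_const, card_powerset, nsmul_eq_mul]
      push_cast
      have := negMulLog_div_pow 1 #Q
      rw [mul_left_comm, this, hp]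
      simp
      apply le_of_eq
      ring

theorem star_upper {P : Type*} [Fintype P] [PartialOrder P] [DecidableEq P] (b : P)
    (hb : ∀ y, b ≤ y) (htop : ∀ x y : P, x ≠ b → x ≤ y → x = y)
    (x c : ℝ) (hx0 : 1 / 5 ≤ x) (hx1 : x ≤ 1 / 2) (hx : H₂ x = (1 - x) * log 2)
    (hcard : 3 ≤ Fintype.card P)
    (α : Finset P → ℝ) (hα : IsWeighting α) (hc : ∀ Q : Set P, Q.Nonempty → c ≤ critExp α Q) :
    c ≤ H₂ x := by
  classical
  have hn : ({b} : Finset P) ∉ (univ.erase b).powerset := by simp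
  obtain ⟨ha0, -, ha1⟩ := hα
  rw [star_antichains b hb htop] at ha0
  rw [star_antichains b hb htop, sum_insert hn] at ha1
  set p := α {b} with hpdef
  have hp0 : 0 ≤ p := ha0 _ (mem_insert_self _ _)
  have hs0 : 0 ≤ ∑ A ∈ (univ.erase b).powerset, α A :=
    sum_nonneg fun A hA => ha0 _ (mem_insert_of_mem hA)
  have hp1 : p ≤ 1 := by linarith
  have hs : ∑ A ∈ (univ.erase b).powerset, α A = 1 - p := by linarith
  rcases le_total p x with hpx | hpx
  · have h := hc (({b} : Finset P) : Set P) (by simp)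
    unfold critExp at h
    rw [Set.ncard_coe_finset, star_antichainsIn_mem b hb htop {b} (by simp)] at h
    simp only [← neg_mul] at h
    change c ≤ (∑ T ∈ _, negMulLog (shadowWeight α (({b} : Finset P) : Set P) T)) / _ at h
    have e : (({b} : Finset P).erase b).powerset = {∅} := by simp
    rw [e, sum_insert (by simp), sum_singleton, star_weight b hb htop, star_weight b hb htop] at h
    have z1 : ∑ A ∈ (univ.erase b).powerset with A ∩ {b} = {b}, α A = 0 := by
      apply sum_eq_zero
      intro A hA
      rw [mem_filter, mem_powerset] at hA
      have : b ∈ A ∩ {b} := by rw [hA.2]; simp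
      have := hA.1 (mem_inter.1 this).1
      simp at this
    have z2 : ∑ A ∈ (univ.erase b).powerset with A ∩ {b} = ∅, α A = 1 - p := by
      rw [filter_true_of_mem, hs]
      intro A hA
      rw [mem_powerset] at hA
      rw [inter_singleton_of_notMem]
      intro hbA
      simpa using hA hbA
    rw [z1, z2] at h
    simp only [mem_singleton, if_true, singleton_ne_empty, if_false, add_zero, zero_add,
      card_singleton, Nat.cast_one, div_one, ← hpdef] at h
    rw [← H₂_eq_add] at h
    refine h.trans ?_
    rw [H₂_eq_binEntropy, H₂_eq_binEntropy]
    exact binEntropy_strictMonoOn.monotoneOn ⟨hp0, by norm_num at hx1 ⊢; linarith⟩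
      ⟨by linarith, by norm_num at hx1 ⊢; linarith⟩ hpx
  · have h := hc ((univ : Finset P) : Set P) ⟨b, by simp⟩
    unfold critExp at h
    rw [Set.ncard_coe_finset, star_antichainsIn_mem b hb htop univ (by simp)] at h
    simp only [← neg_mul] at h
    change c ≤ (∑ T ∈ _, negMulLog (shadowWeight α ((univ : Finset P) : Set P) T)) / _ at h
    have hw : ∀ T ∈ insert {b} (univ.erase b).powerset,
        negMulLog (shadowWeight α ((univ : Finset P) : Set P) T) = negMulLog (α T) := by
      intro T hT
      rw [star_weight b hb htop]
      simp only [mem_univ, if_true, inter_univ, sum_filter, sum_ite_eq']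
      rw [mem_insert] at hT
      rcases hT with rfl | hT
      · rw [if_pos rfl, if_neg hn, add_zero]
      · rw [if_neg (fun h : {b} = T => hn (h ▸ hT)), if_pos hT, zero_add]
    rw [sum_congr rfl hw, sum_insert hn, ← hpdef] at h
    set t := #(univ.erase b) with ht
    have hcu : #(univ : Finset P) = t + 1 := (card_erase_add_one (mem_univ b)).symm
    have ht2 : 2 ≤ t := by
      rw [← card_univ, hcu] at hcard; omega
    have hN : (0 : ℝ) < 2 ^ t := by positivity
    have hJ := concaveOn_negMulLog.le_map_sum (t := (univ.erase b).powerset)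
      (w := fun _ => 1 / (2 : ℝ) ^ t) (p := α) (fun _ _ => by positivity)
      (by rw [sum_const, card_powerset, nsmul_eq_mul, ← ht]; push_cast; field_simp)
      (fun A hA => ha0 _ (mem_insert_of_mem hA))
    simp only [smul_eq_mul] at hJ
    rw [← mul_sum, ← mul_sum, hs] at hJ
    have hJ2 := mul_le_mul_of_nonneg_left hJ hN.le
    rw [one_div_mul_eq_div (2 ^ t) (1 - p), negMulLog_div_pow] at hJ2
    have e : (2 : ℝ) ^ t * (1 / 2 ^ t * ∑ A ∈ (univ.erase b).powerset, negMulLog (α A))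
      = ∑ A ∈ (univ.erase b).powerset, negMulLog (α A) := by field_simp
    rw [e] at hJ2
    have hT := H₂_tangent x p hx0 hx1 hpx hp1
    have hEq := H₂_eq_add p
    have hpos : (0 : ℝ) < (t : ℝ) + 1 := by positivity
    rw [hcu] at h
    push_cast at h
    rw [le_div_iff₀ hpos] at h
    have hl : 0 < log 2 := log_pos (by norm_num)
    have ht2' : (2 : ℝ) ≤ t := by exact_mod_cast ht2
    have hm : (p - x) * (2 * log 2) ≤ (p - x) * (t * log 2) :=
      mul_le_mul_of_nonneg_left (mul_le_mul_of_nonneg_right ht2' hl.le) (by linarith)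
    have hfin : c * (t + 1) ≤ H₂ x * (t + 1) := by
      have : H₂ x * (t + 1) = H₂ x + (1 - x) * (t * log 2) := by
        rw [mul_add, mul_one]; nth_rewrite 1 [hx]; ring
      rw [this]
      linarith
    exact le_of_mul_le_mul_right hfin hpos

end Star

/-- There is a unique `x⋆ ∈ [1/5, 1/2]` with `(1 - x⋆) log 2 - H₂(x⋆) = 0`, and for every
`t ≥ 2` the star poset `C(1,t)` satisfies `c_⋆(C(1,t)) = H₂(x⋆)`. -/
theorem stmt14 :
    ∃ xs : ℝ, xs ∈ Set.Icc (1 / 5 : ℝ) (1 / 2) ∧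
      (1 - xs) * Real.log 2 - H₂ xs = 0 ∧
      (∀ y ∈ Set.Icc (1 / 5 : ℝ) (1 / 2), (1 - y) * Real.log 2 - H₂ y = 0 → y = xs) ∧
      ∀ t : ℕ, 2 ≤ t → critStar (Layered 2 ![1, t]) = H₂ xs := by
  classical
  obtain ⟨x, hx, h0⟩ := star_exists
  have hxe : H₂ x = (1 - x) * Real.log 2 := by linarith
  refine ⟨x, hx, by linarith, ?_, ?_⟩
  · intro y hy hy0
    apply star_strictMono.injOn hy hx
    show H₂ y - (1 - y) * Real.log 2 = H₂ x - (1 - x) * Real.log 2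
    linarith
  · intro t ht
    let b : Layered 2 ![1, t] := ⟨0, (0 : Fin 1)⟩
    have h01 : ∀ y : Layered 2 ![1, t], y.1 = 0 → y = b := by
      rintro ⟨i, j⟩ hi
      dsimp at hi
      subst hi
      have : j = (0 : Fin 1) := Subsingleton.elim (α := Fin 1) _ _
      subst this
      rfl
    have hb : ∀ y : Layered 2 ![1, t], b ≤ y := by
      intro y
      by_cases hy : y.1 = 0
      · exact Or.inr (h01 y hy).symm
      · exact Or.inl (Fin.pos_iff_ne_zero.2 hy)
    have htop : ∀ x y : Layered 2 ![1, t], x ≠ b → x ≤ y → x = y := by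
      intro x y hxb hxy
      rcases hxy with h | h
      · exfalso
        apply hxb
        apply h01
        have := x.1.isLt
        have := y.1.isLt
        have h' : x.1.val < y.1.val := h
        apply Fin.ext
        show x.1.val = 0
        omega
      · exact h
    have hcard : 3 ≤ Fintype.card (Layered 2 ![1, t]) := by
      have : Fintype.card (Layered 2 ![1, t]) = 1 + t := by
        show Fintype.card ((i : Fin 2) × Fin (![1, t] i)) = 1 + t
        simp [Fintype.card_sigma]
      omega
    apply IsGreatest.csSup_eq
    constructor
    · refine ⟨?_, star_lower b hb htop x (by linarith [hx.1]) (by linarith [hx.2]) hxe⟩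
      rw [hxe]
      have hl : 0 < Real.log 2 := Real.log_pos (by norm_num)
      have : 0 ≤ 1 - x := by linarith [hx.2]
      positivity
    · rintro c ⟨-, α, hα, hc⟩
      exact star_upper b hb htop x c hx.1 hx.2 hxe hcard α hα hc
end
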